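/- arXiv:1911.08458 — 3 statements merged into one kernel-verified Lean document; each statement's English description precedes it below -/
import Mathlib

section
/- For every ε > 0 there exists B₀ such that for all real B ≥ B₀ and every positive integer b with φ(b) ≤ B, one has b ≤ (e^γ + ε)·B·log log B, where γ is the Euler–Mascheroni constant. -/
open Filter Real

/-!
The ratio `n / φ n` is the exponential of the sum over `p ∣ n` of `eulerWeight p = -log (1 - 1/p)`.
With `y = log n`, the prime factors beyond `y` contribute `o(1)`, because their logarithms add up
to at most `y` (`sum_primeFactors_eulerWeight_le`), while those up to `y` contribute at most the
sum over all primes up to `y`. Mertens' third theorem evaluates the latter as `log log y + γ + o(1)`,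
so `n ≤ (e^γ + o(1)) φ n log log n` (`eventually_le_mul_totient_mul_log_log`). If `φ b ≤ B`, this
forces `b ≤ B^3`, hence `log log b ≤ log log B + log 3`, which gives the claim.

Mertens' third theorem (`tendsto_sum_expPrimes_sub_log`) is proved along the sequence `e^K`. Let
`b k` be the sum of the weights over the primes in `(e^k, e^(k+1)]`. Mertens' first theorem, which
comes from Legendre's formula for `N!` and Chebyshev's bound for `θ`, makes `∑ (b k - 1/(k+1))`
converge by Dirichlet's test. Its value is found by Abel's limit theorem at `z = e^(-δ)`: up to
`o(1)`, the series `∑ b k z^(k+1)` is `log ζ(1+δ) = -log δ + o(1)`, and `∑ z^(k+1)/(k+1)` is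
`-log (1 - z) = -log δ + o(1)`, so the value is `0`. Comparison with the harmonic numbers brings
in `γ`.
-/

/-! ### Mertens' first theorem -/

/-- The contribution `-log (1 - 1/p)` of the prime `p` to `log (n / φ n)` for `p ∣ n`. -/
noncomputable def eulerWeight (p : ℕ) : ℝ := -log (1 - (p : ℝ)⁻¹)

lemma inv_le_eulerWeight {p : ℕ} (hp : 2 ≤ p) : (p : ℝ)⁻¹ ≤ eulerWeight p := by
  have hp' : (2 : ℝ) ≤ p := by exact_mod_cast hp
  have h1 : (p : ℝ)⁻¹ < 1 := inv_lt_one_of_one_lt₀ (by linarith)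
  have := log_le_sub_one_of_pos (show 0 < 1 - (p : ℝ)⁻¹ by linarith)
  unfold eulerWeight
  linarith

lemma eulerWeight_nonneg {p : ℕ} (hp : 2 ≤ p) : 0 ≤ eulerWeight p :=
  le_trans (by positivity) (inv_le_eulerWeight hp)

lemma eulerWeight_le {p : ℕ} (hp : 2 ≤ p) : eulerWeight p ≤ ((p : ℝ) - 1)⁻¹ := by
  have hp' : (2 : ℝ) ≤ p := by exact_mod_cast hp
  have h0 : (0 : ℝ) < p - 1 := by linarith
  have e : 1 - (p : ℝ)⁻¹ = ((p : ℝ) / (p - 1))⁻¹ := by field_simp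
  have := log_le_sub_one_of_pos (show 0 < (p : ℝ) / (p - 1) by positivity)
  have e2 : (p : ℝ) / (p - 1) - 1 = ((p : ℝ) - 1)⁻¹ := by field_simp; ring
  rw [eulerWeight, e, log_inv, neg_neg]
  linarith

/-- `1/(p-1)` and `1/p` are interchangeable as weights of `log p`, up to a bounded error. -/
lemma exists_sum_log_div_le : ∃ C : ℝ, ∀ S : Finset ℕ, (∀ p ∈ S, 2 ≤ p) →
    ∑ p ∈ S, log p * (((p : ℝ) - 1)⁻¹ - (p : ℝ)⁻¹) ≤ C := by
  have hs : Summable fun n : ℕ ↦ 4 * (n : ℝ) ^ (-(3 / 2) : ℝ) :=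
    (Real.summable_nat_rpow.mpr (by norm_num)).mul_left 4
  refine ⟨∑' n : ℕ, 4 * (n : ℝ) ^ (-(3 / 2) : ℝ), fun S hS ↦ ?_⟩
  refine (Finset.sum_le_sum fun p hp ↦ ?_).trans (hs.sum_le_tsum S fun n _ ↦ by positivity)
  have hp' : (2 : ℝ) ≤ p := by exact_mod_cast hS p hp
  have h0 : (0 : ℝ) < p := by linarith
  have h1 : (0 : ℝ) < p - 1 := by linarith
  have hl : log p ≤ 2 * (p : ℝ) ^ (1 / 2 : ℝ) := by
    have := Real.log_le_rpow_div h0.le (show (0 : ℝ) < 1 / 2 by norm_num)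
    linarith
  have h2 : ((p : ℝ) - 1)⁻¹ - (p : ℝ)⁻¹ ≤ 2 * (p : ℝ) ^ (-2 : ℝ) := by
    rw [rpow_neg h0.le, rpow_two, inv_sub_inv h1.ne' h0.ne', ← div_eq_mul_inv,
      div_le_div_iff₀ (by positivity) (by positivity)]
    nlinarith
  have h3 : 0 ≤ ((p : ℝ) - 1)⁻¹ - (p : ℝ)⁻¹ := by
    rw [sub_nonneg]; exact inv_anti₀ h1 (by linarith)
  calc log p * (((p : ℝ) - 1)⁻¹ - (p : ℝ)⁻¹)
      ≤ (2 * (p : ℝ) ^ (1 / 2 : ℝ)) * (2 * (p : ℝ) ^ (-2 : ℝ)) := by gcongr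
    _ = 4 * ((p : ℝ) ^ (1 / 2 : ℝ) * (p : ℝ) ^ (-2 : ℝ)) := by ring
    _ = 4 * (p : ℝ) ^ (-(3 / 2) : ℝ) := by rw [← rpow_add h0]; norm_num

lemma log_factorial_eq_sum (N : ℕ) :
    log (N.factorial) = ∑ p ∈ N.primesLE, (N.factorial.factorization p : ℝ) * log p := by
  have h : N.factorial.primeFactors ⊆ N.primesLE := fun p hp ↦ by
    have hp' := Nat.prime_of_mem_primeFactors hp
    exact Nat.mem_primesLE.mpr ⟨hp'.dvd_factorial.mp (Nat.dvd_of_mem_primeFactors hp), hp'⟩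
  rw [Real.log_nat_eq_sum_factorization, Finsupp.sum_of_support_subset _ h _ (by simp)]

/-- Mertens' first theorem for the weights `eulerWeight`. -/
lemma exists_abs_sum_eulerWeight_mul_log_sub_log_le : ∃ C : ℝ, ∀ N : ℕ, 1 ≤ N →
    |∑ p ∈ N.primesLE, eulerWeight p * log p - log N| ≤ C := by
  obtain ⟨C, hC⟩ := exists_sum_log_div_le
  refine ⟨|C| + log 4 + 1, fun N hN ↦ ?_⟩
  have hN0 : (0 : ℝ) < N := by exact_mod_cast hN
  have hC := (hC N.primesLE fun p hp ↦ Nat.two_le_of_mem_primesLE hp).trans (le_abs_self C)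
  have hlog4 : 0 ≤ log 4 := log_nonneg (by norm_num)
  have hlow : log N - 1 ≤ ∑ p ∈ N.primesLE, ((p : ℝ) - 1)⁻¹ * log p := by
    have h1 : (N : ℝ) * (log N - 1) ≤ log N.factorial := by
      have := pow_div_factorial_le_exp (N : ℝ) hN0.le N
      have h := log_le_log (by positivity) this
      rw [log_exp, log_div (by positivity) (by positivity), log_pow] at h
      linarith
    have h2 : log N.factorial ≤ N * ∑ p ∈ N.primesLE, ((p : ℝ) - 1)⁻¹ * log p := by
      rw [log_factorial_eq_sum, Finset.mul_sum]
      refine Finset.sum_le_sum fun p hp ↦ ?_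
      have hp2 : 2 ≤ p := Nat.two_le_of_mem_primesLE hp
      have hp' : (2 : ℝ) ≤ p := by exact_mod_cast hp2
      have h3 : ((p : ℝ) - 1) * (N.factorial.factorization p : ℝ) ≤ N := by
        have := Nat.sub_one_mul_factorization_factorial (n := N) (Nat.prime_of_mem_primesLE hp)
        have h4 : (p - 1) * N.factorial.factorization p ≤ N := this ▸ Nat.sub_le _ _
        have h5 : (((p - 1) * N.factorial.factorization p : ℕ) : ℝ) ≤ N := by exact_mod_cast h4
        rwa [Nat.cast_mul, Nat.cast_sub (by omega), Nat.cast_one] at h5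
      rw [← mul_assoc]
      refine mul_le_mul_of_nonneg_right ?_ (log_nonneg (by linarith))
      rw [← div_eq_mul_inv, le_div_iff₀ (by linarith)]
      linarith
    exact le_of_mul_le_mul_left (h1.trans h2) hN0
  have hupp : ∑ p ∈ N.primesLE, (p : ℝ)⁻¹ * log p ≤ log N + log 4 := by
    have h1 : log N.factorial ≤ N * log N := by
      rw [← log_pow]
      exact log_le_log (by positivity) (by exact_mod_cast Nat.factorial_le_pow N)
    have h2 : N * ∑ p ∈ N.primesLE, (p : ℝ)⁻¹ * log p - Chebyshev.theta N ≤
        log N.factorial := by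
      rw [Chebyshev.theta_eq_sum_primesLE_log, log_factorial_eq_sum, Finset.mul_sum,
        ← Finset.sum_sub_distrib]
      refine Finset.sum_le_sum fun p hp ↦ ?_
      have hpp := Nat.prime_of_mem_primesLE hp
      have hp' : (2 : ℝ) ≤ p := by exact_mod_cast hpp.two_le
      have h3 : (N : ℝ) / p - 1 ≤ N.factorial.factorization p := by
        have h4 : N / p ≤ N.factorial.factorization p :=
          calc N / p ≤ (p * (N / p)).factorial.factorization p := by
                rw [Nat.factorization_factorial_mul hpp]; omega
            _ ≤ N.factorial.factorization p :=
                (Nat.factorization_le_iff_dvd (Nat.factorial_ne_zero _)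
                  (Nat.factorial_ne_zero _)).mpr
                  (Nat.factorial_dvd_factorial (Nat.mul_div_le N p)) p
        have h5 : ((N / p : ℕ) : ℝ) ≤ N.factorial.factorization p := by exact_mod_cast h4
        have h6 := Nat.lt_floor_add_one ((N : ℝ) / p)
        rw [Nat.floor_div_eq_div] at h6
        linarith
      have := mul_le_mul_of_nonneg_right h3 (log_nonneg (by linarith : (1 : ℝ) ≤ p))
      rw [div_eq_mul_inv] at this
      linarith
    have h3 := Chebyshev.theta_le_log4_mul_x hN0.le
    refine le_of_mul_le_mul_left (?_ : (N : ℝ) * _ ≤ N * _) hN0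
    linarith
  have hsub : ∑ p ∈ N.primesLE, ((p : ℝ) - 1)⁻¹ * log p - ∑ p ∈ N.primesLE, (p : ℝ)⁻¹ * log p
      ≤ |C| := by
    rw [← Finset.sum_sub_distrib]
    refine le_trans (le_of_eq (Finset.sum_congr rfl fun p _ ↦ by ring)) hC
  have hge : ∑ p ∈ N.primesLE, (p : ℝ)⁻¹ * log p ≤ ∑ p ∈ N.primesLE, eulerWeight p * log p := by
    refine Finset.sum_le_sum fun p hp ↦ ?_
    have := inv_le_eulerWeight (Nat.two_le_of_mem_primesLE hp)
    have := log_natCast_nonneg p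
    gcongr
  have hle : ∑ p ∈ N.primesLE, eulerWeight p * log p ≤
      ∑ p ∈ N.primesLE, ((p : ℝ) - 1)⁻¹ * log p := by
    refine Finset.sum_le_sum fun p hp ↦ ?_
    have := eulerWeight_le (Nat.two_le_of_mem_primesLE hp)
    have := log_natCast_nonneg p
    gcongr
  rw [abs_le]
  constructor <;> linarith

/-! ### The logarithm of the Euler product near `s = 1` -/

lemma neg_log_one_sub_bounds {y : ℝ} (h1 : y ≤ 1 / 2) :
    y ≤ -log (1 - y) ∧ -log (1 - y) ≤ y + 2 * y ^ 2 := by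
  have h := log_le_sub_one_of_pos (show 0 < 1 - y by linarith)
  have h' := one_sub_inv_le_log_of_pos (show 0 < 1 - y by linarith)
  refine ⟨by linarith, ?_⟩
  have : (1 - y)⁻¹ ≤ 1 + y + 2 * y ^ 2 := by
    rw [inv_le_iff_one_le_mul₀ (by linarith)]
    nlinarith [mul_nonneg (sq_nonneg y) (show 0 ≤ 1 - 2 * y by linarith)]
  linarith

lemma rpow_neg_one_add_prime {p : ℕ} (hp : 2 ≤ p) (δ : ℝ) :
    (p : ℝ) ^ (-(1 + δ)) = (p : ℝ) ^ (-δ) * (p : ℝ)⁻¹ := by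
  have hp' : (0 : ℝ) < p := by positivity
  rw [← rpow_neg_one, ← rpow_add hp']
  ring_nf

lemma primes_inv_bounds (p : Nat.Primes) : 0 < (p : ℝ)⁻¹ ∧ (p : ℝ)⁻¹ ≤ 1 / 2 := by
  have hp : (2 : ℝ) ≤ (p : ℕ) := by exact_mod_cast p.2.two_le
  refine ⟨by positivity, ?_⟩
  rw [one_div]
  exact inv_anti₀ (by norm_num) hp

lemma primes_rpow_neg_bounds (p : Nat.Primes) {δ : ℝ} (hδ : 0 ≤ δ) :
    0 < (p : ℝ) ^ (-δ) ∧ (p : ℝ) ^ (-δ) ≤ 1 := by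
  have hp : (2 : ℝ) ≤ (p : ℕ) := by exact_mod_cast p.2.two_le
  exact ⟨by positivity, rpow_le_one_of_one_le_of_nonpos (by linarith) (by linarith)⟩

lemma summable_primes_rpow {r : ℝ} (hr : r < -1) : Summable fun p : Nat.Primes ↦ (p : ℝ) ^ r :=
  (Real.summable_nat_rpow.mpr hr).comp_injective Nat.Primes.coe_nat_injective

lemma summable_eulerWeight_mul_rpow {δ : ℝ} (hδ : 0 < δ) :
    Summable fun p : Nat.Primes ↦ eulerWeight p * (p : ℝ) ^ (-δ) := by
  refine Summable.of_nonneg_of_le (fun p ↦ ?_) (fun p ↦ ?_)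
    ((summable_primes_rpow (show -(1 + δ) < -1 by linarith)).mul_left 2)
  all_goals
    obtain ⟨h0, h1⟩ := primes_inv_bounds p
    obtain ⟨h2, h3⟩ := primes_rpow_neg_bounds p hδ.le
    obtain ⟨h4, h5⟩ := neg_log_one_sub_bounds h1
  · exact mul_nonneg (h0.le.trans h4) h2.le
  · rw [rpow_neg_one_add_prime p.2.two_le]
    have : eulerWeight p ≤ 2 * (p : ℝ)⁻¹ := h5.trans (by nlinarith)
    nlinarith

lemma summable_neg_log_one_sub_rpow {δ : ℝ} (hδ : 0 < δ) :
    Summable fun p : Nat.Primes ↦ -log (1 - (p : ℝ) ^ (-(1 + δ))) := by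
  refine Summable.of_nonneg_of_le (fun p ↦ ?_) (fun p ↦ ?_)
    ((summable_primes_rpow (show -(1 + δ) < -1 by linarith)).mul_left 2)
  all_goals
    obtain ⟨h0, h1⟩ := primes_inv_bounds p
    obtain ⟨h2, h3⟩ := primes_rpow_neg_bounds p hδ.le
    rw [rpow_neg_one_add_prime p.2.two_le]
    have h6 : (p : ℝ) ^ (-δ) * (p : ℝ)⁻¹ ≤ 1 / 2 := by nlinarith
    have h7 : 0 < (p : ℝ) ^ (-δ) * (p : ℝ)⁻¹ := by positivity
    obtain ⟨h4, h5⟩ := neg_log_one_sub_bounds h6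
  · linarith
  · nlinarith

/-- The logarithm of the Euler product of `ζ` on the real half-line `s > 1`. -/
lemma tsum_neg_log_one_sub_rpow {δ : ℝ} (hδ : 0 < δ) :
    ∑' p : Nat.Primes, -log (1 - (p : ℝ) ^ (-(1 + δ))) =
      log (riemannZeta ((1 + δ : ℝ) : ℂ)).re := by
  have h := riemannZeta_eulerProduct_exp_log (s := ((1 + δ : ℝ) : ℂ))
    (by rw [Complex.ofReal_re]; linarith)
  have e : ∀ p : Nat.Primes, -Complex.log (1 - (p : ℂ) ^ (-((1 + δ : ℝ) : ℂ))) =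
      ((-log (1 - (p : ℝ) ^ (-(1 + δ))) : ℝ) : ℂ) := fun p ↦ by
    obtain ⟨h0, h1⟩ := primes_inv_bounds p
    obtain ⟨h2, h3⟩ := primes_rpow_neg_bounds p hδ.le
    have h6 : (p : ℝ) ^ (-(1 + δ)) ≤ 1 / 2 := by
      rw [rpow_neg_one_add_prime p.2.two_le]; nlinarith
    rw [Complex.ofReal_neg, Complex.ofReal_log (by linarith), Complex.ofReal_sub,
      Complex.ofReal_cpow (by positivity)]
    simp
  rw [tsum_congr e, ← Complex.ofReal_tsum, ← Complex.ofReal_exp] at h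
  rw [← h, Complex.ofReal_re, log_exp]

/-- Replacing `-log (1 - p^(-(1+δ)))` by `-log (1 - 1/p) * p^(-δ)` in the logarithm of the Euler
product costs `O(p^(-2))` for each `p`, uniformly in `δ`, hence `o(1)` in total. -/
lemma tendsto_tsum_eulerWeight_mul_rpow_add_log :
    Tendsto (fun δ : ℝ ↦ ∑' p : Nat.Primes, eulerWeight p * (p : ℝ) ^ (-δ) + log δ)
      (nhdsWithin 0 (Set.Ioi 0)) (nhds 0) := by
  have hz : Tendsto (fun δ : ℝ ↦ log (riemannZeta ((1 + δ : ℝ) : ℂ)).re + log δ)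
      (nhdsWithin 0 (Set.Ioi 0)) (nhds 0) := by
    have h1 : Tendsto (fun s : ℝ ↦ log (riemannZeta s).re + log (s - 1))
        (nhdsWithin 1 (Set.Ioi 1)) (nhds 0) :=
      (Asymptotics.isLittleO_one_iff ℝ).mp log_riemannZeta_add_log_sub_isLittleO_ofReal
    have h2 : Tendsto (fun δ : ℝ ↦ 1 + δ) (nhdsWithin 0 (Set.Ioi 0))
        (nhdsWithin 1 (Set.Ioi 1)) := by
      refine tendsto_nhdsWithin_iff.mpr ⟨?_, ?_⟩
      · have : Tendsto (fun δ : ℝ ↦ 1 + δ) (nhds 0) (nhds (1 + 0)) :=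
          (continuous_const.add continuous_id).tendsto 0
        rw [add_zero] at this
        exact this.mono_left nhdsWithin_le_nhds
      · filter_upwards [self_mem_nhdsWithin] with δ hδ
        simpa using hδ
    refine (h1.comp h2).congr fun δ ↦ ?_
    simp
  have hd : Tendsto (fun δ : ℝ ↦ ∑' p : Nat.Primes,
      (eulerWeight p * (p : ℝ) ^ (-δ) - -log (1 - (p : ℝ) ^ (-(1 + δ)))))
      (nhdsWithin 0 (Set.Ioi 0)) (nhds (∑' p : Nat.Primes, (0 : ℝ))) := by
    refine tendsto_tsum_of_dominated_convergence (bound := fun p ↦ 2 * (p : ℝ) ^ (-2 : ℝ))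
      ((summable_primes_rpow (by norm_num)).mul_left 2) (fun p ↦ ?_) ?_
    · obtain ⟨h0, h1⟩ := primes_inv_bounds p
      have hp0 : (p : ℝ) ≠ 0 := by intro h; simp [h] at h0
      have hc : ContinuousAt (fun δ : ℝ ↦
          eulerWeight p * (p : ℝ) ^ (-δ) - -log (1 - (p : ℝ) ^ (-(1 + δ)))) 0 := by
        have : (1 : ℝ) - (p : ℝ) ^ (-(1 + 0) : ℝ) ≠ 0 := by
          rw [add_zero, rpow_neg_one]; linarith
        fun_prop (disch := first | assumption | exact Or.inl hp0)
      have := hc.tendsto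
      simp only [neg_zero, rpow_zero, add_zero, rpow_neg_one, eulerWeight, mul_one, sub_self]
        at this
      exact this.mono_left nhdsWithin_le_nhds
    · filter_upwards [self_mem_nhdsWithin] with δ hδ p
      obtain ⟨h0, h1⟩ := primes_inv_bounds p
      obtain ⟨h2, h3⟩ := primes_rpow_neg_bounds p (le_of_lt hδ)
      obtain ⟨h4, h5⟩ := neg_log_one_sub_bounds h1
      have e : (p : ℝ) ^ (-2 : ℝ) = ((p : ℝ)⁻¹) ^ 2 := by
        rw [rpow_neg (by positivity), rpow_two, inv_pow]
      rw [rpow_neg_one_add_prime p.2.two_le, e]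
      have h6 : (p : ℝ) ^ (-δ) * (p : ℝ)⁻¹ ≤ 1 / 2 := by nlinarith
      have h7 : 0 < (p : ℝ) ^ (-δ) * (p : ℝ)⁻¹ := by positivity
      obtain ⟨h8, h9⟩ := neg_log_one_sub_bounds h6
      unfold eulerWeight
      generalize (p : ℝ) ^ (-δ) = t at *
      generalize (p : ℝ)⁻¹ = x at *
      have h10 : (t * x) ^ 2 ≤ x ^ 2 := by
        rw [mul_pow]; nlinarith [sq_nonneg x, mul_nonneg h2.le (sub_nonneg.mpr h3)]
      have h11 : t * x ^ 2 ≤ x ^ 2 := by nlinarith [sq_nonneg x]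
      have h12 := mul_le_mul_of_nonneg_left h4 h2.le
      have h13 := mul_le_mul_of_nonneg_left h5 h2.le
      rw [Real.norm_eq_abs, abs_le]
      rw [mul_comm] at h12
      constructor <;> nlinarith
  rw [tsum_zero] at hd
  have := hd.add hz
  rw [add_zero] at this
  refine this.congr' ?_
  filter_upwards [self_mem_nhdsWithin] with δ hδ
  rw [(summable_eulerWeight_mul_rpow hδ).tsum_sub (summable_neg_log_one_sub_rpow hδ),
    tsum_neg_log_one_sub_rpow hδ]
  ring

/-! ### Mertens' third theorem -/

/-- The index `k` of the block `(e^k, e^(k+1)]` that contains `p ≥ 2`. The truncated subtraction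
is harmless, since `log p > 0`. -/
noncomputable def blockIndex (p : ℕ) : ℕ := ⌈log p⌉₊ - 1

/-- The primes up to `e^K`. -/
noncomputable def expPrimes (K : ℕ) : Finset ℕ := ⌊exp K⌋₊.primesLE

/-- The primes in `(e^k, e^(k+1)]`. -/
noncomputable def primeBlock (k : ℕ) : Finset ℕ := {p ∈ expPrimes (k + 1) | blockIndex p = k}

lemma ceil_log_pos {p : ℕ} (hp : 2 ≤ p) : 0 < ⌈log p⌉₊ :=
  Nat.ceil_pos.mpr (log_pos (by exact_mod_cast hp))

lemma blockIndex_lt_log {p : ℕ} (hp : 2 ≤ p) : (blockIndex p : ℝ) < log p := by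
  have := ceil_log_pos hp
  exact Nat.lt_ceil.mp (by unfold blockIndex; omega)

lemma log_le_blockIndex_add_one {p : ℕ} (hp : 2 ≤ p) : log p ≤ blockIndex p + 1 := by
  have := ceil_log_pos hp
  have h : ⌈log p⌉₊ ≤ blockIndex p + 1 := by unfold blockIndex; omega
  exact_mod_cast Nat.ceil_le.mp h

lemma mem_expPrimes {p K : ℕ} : p ∈ expPrimes K ↔ p.Prime ∧ blockIndex p < K := by
  rw [expPrimes, Nat.mem_primesLE, and_comm]
  refine and_congr_right fun hp ↦ ?_
  have hp0 : (0 : ℝ) < p := by exact_mod_cast hp.pos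
  have := ceil_log_pos hp.two_le
  rw [Nat.le_floor_iff (exp_pos _).le, ← log_le_iff_le_exp hp0, ← Nat.ceil_le, blockIndex]
  omega

lemma mem_primeBlock {p k : ℕ} : p ∈ primeBlock k ↔ p.Prime ∧ blockIndex p = k := by
  rw [primeBlock, Finset.mem_filter, mem_expPrimes]
  constructor
  · rintro ⟨⟨h, -⟩, h'⟩; exact ⟨h, h'⟩
  · rintro ⟨h, h'⟩; exact ⟨⟨h, by omega⟩, h'⟩

lemma sum_range_sum_primeBlock (f : ℕ → ℝ) (K : ℕ) :
    ∑ k ∈ Finset.range K, ∑ p ∈ primeBlock k, f p = ∑ p ∈ expPrimes K, f p := by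
  rw [← Finset.sum_fiberwise_of_maps_to (s := expPrimes K) (t := Finset.range K)
    (g := blockIndex) (fun p hp ↦ Finset.mem_range.mpr (mem_expPrimes.mp hp).2)]
  refine Finset.sum_congr rfl fun k hk ↦ Finset.sum_congr ?_ fun _ _ ↦ rfl
  ext p
  rw [mem_primeBlock, Finset.mem_filter, mem_expPrimes]
  have := Finset.mem_range.mp hk
  constructor
  · rintro ⟨h, h'⟩; exact ⟨⟨h, by omega⟩, h'⟩
  · rintro ⟨⟨h, -⟩, h'⟩; exact ⟨h, h'⟩

lemma tendsto_sum_expPrimes {f : ℕ → ℝ} {R : ℝ} (h : HasSum (fun p : Nat.Primes ↦ f p) R) :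
    Tendsto (fun K ↦ ∑ p ∈ expPrimes K, f p) atTop (nhds R) := by
  have h1 : HasSum (Set.indicator {p | p.Prime} f) R := (hasSum_subtype_iff_indicator).mp h
  have h2 : Tendsto (fun K : ℕ ↦ ⌊exp K⌋₊ + 1) atTop atTop :=
    tendsto_atTop_mono (fun _ ↦ Nat.le_succ _)
      (tendsto_nat_floor_atTop.comp (tendsto_exp_atTop.comp tendsto_natCast_atTop_atTop))
  refine (h1.tendsto_sum_nat.comp h2).congr fun K ↦ ?_
  rw [expPrimes, Nat.primesLE_eq_filter_range, Finset.sum_filter]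
  refine Finset.sum_congr rfl fun p _ ↦ ?_
  rw [Set.indicator_apply]
  rfl

/-- Mertens' first theorem along the sequence `e^K`. -/
lemma exists_abs_sum_expPrimes_le : ∃ C : ℝ, ∀ K : ℕ,
    |∑ p ∈ expPrimes K, eulerWeight p * log p - K| ≤ C := by
  obtain ⟨C, hC⟩ := exists_abs_sum_eulerWeight_mul_log_sub_log_le
  refine ⟨C + log 2, fun K ↦ ?_⟩
  have h1 : (1 : ℝ) ≤ exp K := one_le_exp (Nat.cast_nonneg K)
  have hN : 1 ≤ ⌊exp K⌋₊ := Nat.le_floor (by simp)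
  have hN' : (1 : ℝ) ≤ ⌊exp K⌋₊ := by exact_mod_cast hN
  have h2 : log ⌊exp K⌋₊ ≤ K := by
    rw [log_le_iff_le_exp (by linarith)]
    exact Nat.floor_le (exp_pos _).le
  have h3 : (K : ℝ) ≤ log 2 + log ⌊exp K⌋₊ := by
    rw [← log_mul (by norm_num) (by linarith), le_log_iff_exp_le (by linarith)]
    have := Nat.lt_floor_add_one (exp (K : ℝ))
    linarith
  have := abs_le.mp (hC _ hN)
  rw [expPrimes, abs_le]
  constructor <;> linarith

/-- The partial sums of `∑ (M k - 1)`, where `M k` is the sum of `eulerWeight p * log p` over the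
`k`-th block, are bounded, so Dirichlet's test applies to `∑ (M k - 1) / (k + 1)`; and on the
`k`-th block `log p` is `k + O(1)`. -/
lemma exists_tendsto_sum_primeBlock_sub : ∃ l : ℝ, Tendsto (fun n ↦ ∑ k ∈ Finset.range n,
    (∑ p ∈ primeBlock k, eulerWeight p - 1 / ((k : ℝ) + 1))) atTop (nhds l) := by
  obtain ⟨C, hC⟩ := exists_abs_sum_expPrimes_le
  set M : ℕ → ℝ := fun k ↦ ∑ p ∈ primeBlock k, eulerWeight p * log p with hM
  set b : ℕ → ℝ := fun k ↦ ∑ p ∈ primeBlock k, eulerWeight p with hb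
  have hS : ∀ K, |∑ k ∈ Finset.range K, M k - K| ≤ C := fun K ↦ by
    rw [hM, sum_range_sum_primeBlock]; exact hC K
  have hMle : ∀ k, M k ≤ 2 * C + 1 := fun k ↦ by
    have h1 := abs_le.mp (hS k)
    have h2 := abs_le.mp (hS (k + 1))
    rw [Finset.sum_range_succ, Nat.cast_add_one] at h2
    linarith
  have hdir : CauchySeq fun n ↦ ∑ k ∈ Finset.range n, (1 / ((k : ℝ) + 1)) • (M k - 1) := by
    refine Antitone.cauchySeq_series_mul_of_tendsto_zero_of_bounded (b := C) ?_ ?_ fun n ↦ ?_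
    · intro i j hij
      have : (i : ℝ) ≤ j := by exact_mod_cast hij
      exact one_div_le_one_div_of_le (by positivity) (by linarith)
    · exact tendsto_one_div_add_atTop_nhds_zero_nat
    · simpa using hS n
  obtain ⟨l₁, hl₁⟩ := cauchySeq_tendsto_of_complete hdir
  have hdiff : ∀ k, 0 ≤ b k - M k / (k + 1) ∧
      b k - M k / (k + 1) ≤ (3 * (2 * C + 1)) * (((k + 1 : ℕ) : ℝ) ^ 2)⁻¹ := fun k ↦ by
    have hk : (0 : ℝ) < k + 1 := by positivity
    have h1 : M k ≤ b k * (k + 1) := by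
      rw [hM, hb, Finset.sum_mul]
      refine Finset.sum_le_sum fun p hp ↦ ?_
      obtain ⟨hpp, rfl⟩ := mem_primeBlock.mp hp
      exact mul_le_mul_of_nonneg_left (log_le_blockIndex_add_one hpp.two_le)
        (eulerWeight_nonneg hpp.two_le)
    have h2 : b k * k ≤ M k := by
      rw [hM, hb, Finset.sum_mul]
      refine Finset.sum_le_sum fun p hp ↦ ?_
      obtain ⟨hpp, rfl⟩ := mem_primeBlock.mp hp
      exact mul_le_mul_of_nonneg_left (blockIndex_lt_log hpp.two_le).le
        (eulerWeight_nonneg hpp.two_le)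
    -- `3 log p ≥ k + 1` follows from `log p > k` if `k ≥ 1`, and from `log p ≥ log 2` if `k = 0`.
    have h3 : b k * ((k + 1) / 3) ≤ M k := by
      rw [hM, hb, Finset.sum_mul]
      refine Finset.sum_le_sum fun p hp ↦ ?_
      obtain ⟨hpp, rfl⟩ := mem_primeBlock.mp hp
      refine mul_le_mul_of_nonneg_left ?_ (eulerWeight_nonneg hpp.two_le)
      have h4 := (blockIndex_lt_log hpp.two_le).le
      have h5 : log 2 ≤ log p := log_le_log (by norm_num) (by exact_mod_cast hpp.two_le)
      have h6 := log_two_gt_d9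
      linarith
    refine ⟨by rw [sub_nonneg, div_le_iff₀ hk]; exact h1, ?_⟩
    have e : b k - M k / (k + 1) = (b k * (k + 1) - M k) / (k + 1) := by field_simp
    rw [e, Nat.cast_add_one, ← div_eq_mul_inv, div_le_div_iff₀ hk (by positivity)]
    have h7 := hMle k
    have h8 : (b k * (k + 1) - M k) * (k + 1) ≤ 3 * (2 * C + 1) := by nlinarith
    nlinarith
  have hsum : Summable fun k ↦ b k - M k / (k + 1) := by
    refine Summable.of_nonneg_of_le (fun k ↦ (hdiff k).1) (fun k ↦ (hdiff k).2) ?_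
    exact ((summable_nat_add_iff 1).mpr
      (Real.summable_nat_pow_inv.mpr (by norm_num : 1 < 2))).mul_left _
  refine ⟨l₁ + ∑' k, (b k - M k / (k + 1)), (hl₁.add hsum.hasSum.tendsto_sum_nat).congr fun n ↦ ?_⟩
  rw [← Finset.sum_add_distrib]
  refine Finset.sum_congr rfl fun k _ ↦ ?_
  rw [smul_eq_mul]
  ring

lemma rpow_neg_between {p : ℕ} (hp : 2 ≤ p) {δ : ℝ} (hδ : 0 < δ) :
    exp (-δ) * exp (-δ) ^ blockIndex p ≤ (p : ℝ) ^ (-δ) ∧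
      (p : ℝ) ^ (-δ) ≤ exp (-δ) ^ blockIndex p := by
  have hp0 : (0 : ℝ) < p := by positivity
  have h1 := blockIndex_lt_log hp
  have h2 := log_le_blockIndex_add_one hp
  rw [← exp_nat_mul, ← exp_add, rpow_def_of_pos hp0, exp_le_exp, exp_le_exp]
  constructor <;> nlinarith

/-- Grouping the primes by blocks turns `∑ eulerWeight p * p^(-δ)` into a power series in
`z = e^(-δ)`, up to a factor between `1` and `z`. -/
lemma exists_hasSum_primeBlock {δ : ℝ} (hδ : 0 < δ) : ∃ R : ℝ,
    HasSum (fun k ↦ (∑ p ∈ primeBlock k, eulerWeight p) * exp (-δ) ^ k) R ∧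
    exp (-δ) * R ≤ ∑' p : Nat.Primes, eulerWeight p * (p : ℝ) ^ (-δ) ∧
    ∑' p : Nat.Primes, eulerWeight p * (p : ℝ) ^ (-δ) ≤ R := by
  have hQ := summable_eulerWeight_mul_rpow hδ
  have hz := exp_pos (-δ)
  have hw : ∀ p : Nat.Primes, 0 ≤ eulerWeight p := fun p ↦ eulerWeight_nonneg p.2.two_le
  have hlow : ∀ p : Nat.Primes, exp (-δ) * (eulerWeight p * exp (-δ) ^ blockIndex p) ≤
      eulerWeight p * (p : ℝ) ^ (-δ) := fun p ↦ by
    have := mul_le_mul_of_nonneg_left (rpow_neg_between p.2.two_le hδ).1 (hw p)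
    linarith
  have hR : Summable fun p : Nat.Primes ↦ eulerWeight p * exp (-δ) ^ blockIndex p := by
    refine Summable.of_nonneg_of_le (fun p ↦ mul_nonneg (hw p) (by positivity)) (fun p ↦ ?_)
      (hQ.mul_left (exp (-δ))⁻¹)
    rw [← div_eq_inv_mul, le_div_iff₀' hz]
    exact hlow p
  refine ⟨_, ?_, ?_, hQ.tsum_le_tsum (fun p ↦ ?_) hR⟩
  · rw [hasSum_iff_tendsto_nat_of_nonneg fun k ↦ mul_nonneg (Finset.sum_nonneg fun p hp ↦
      eulerWeight_nonneg (mem_primeBlock.mp hp).1.two_le) (by positivity)]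
    refine (tendsto_sum_expPrimes
      (f := fun p ↦ eulerWeight p * exp (-δ) ^ blockIndex p) hR.hasSum).congr fun K ↦ ?_
    rw [← sum_range_sum_primeBlock]
    refine Finset.sum_congr rfl fun k _ ↦ ?_
    rw [Finset.sum_mul]
    refine Finset.sum_congr rfl fun p hp ↦ ?_
    rw [(mem_primeBlock.mp hp).2]
  · rw [← tsum_mul_left]
    exact (hR.mul_left _).tsum_le_tsum hlow hQ
  · exact mul_le_mul_of_nonneg_left (rpow_neg_between p.2.two_le hδ).2 (hw p)

lemma tendsto_one_sub_exp_neg_div :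
    Tendsto (fun δ : ℝ ↦ (1 - exp (-δ)) / δ) (nhdsWithin 0 (Set.Ioi 0)) (nhds 1) := by
  have h : HasDerivAt (fun δ : ℝ ↦ -exp (-δ)) 1 0 := by
    have : HasDerivAt (fun δ : ℝ ↦ -exp (-δ)) (-(exp (-0) * -1)) 0 :=
      (hasDerivAt_neg 0).exp.neg
    simpa using this
  have := h.tendsto_slope_zero_right
  refine this.congr fun t ↦ ?_
  simp
  ring

/-- **Mertens' third theorem** along the sequence `e^K`, in logarithmic form. The differences
between the block sums and `1/(k+1)` have a convergent sum by
`exists_tendsto_sum_primeBlock_sub`; Abel's limit theorem evaluates it, since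
`∑ z^(k+1)/(k+1) = -log (1-z)` matches the behaviour of `log ζ (1+δ)` for `z = e^(-δ)`. -/
lemma tendsto_sum_expPrimes_sub_log : Tendsto
    (fun K : ℕ ↦ ∑ p ∈ expPrimes K, eulerWeight p - log K) atTop
      (nhds eulerMascheroniConstant) := by
  obtain ⟨l, hl⟩ := exists_tendsto_sum_primeBlock_sub
  set b : ℕ → ℝ := fun k ↦ ∑ p ∈ primeBlock k, eulerWeight p with hb
  set Q : ℝ → ℝ := fun δ ↦ ∑' p : Nat.Primes, eulerWeight p * (p : ℝ) ^ (-δ) with hQ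
  have hz : Tendsto (fun δ : ℝ ↦ exp (-δ)) (nhdsWithin 0 (Set.Ioi 0)) (nhds 1) := by
    have : Tendsto (fun δ : ℝ ↦ exp (-δ)) (nhds 0) (nhds (exp (-0))) :=
      (by fun_prop : Continuous fun δ : ℝ ↦ exp (-δ)).tendsto 0
    rw [neg_zero, exp_zero] at this
    exact this.mono_left nhdsWithin_le_nhds
  have hz' : Tendsto (fun δ : ℝ ↦ exp (-δ)) (nhdsWithin 0 (Set.Ioi 0))
      (nhdsWithin 1 (Set.Iio 1)) := by
    refine tendsto_nhdsWithin_iff.mpr ⟨hz, ?_⟩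
    filter_upwards [self_mem_nhdsWithin] with δ hδ
    have : 0 < δ := hδ
    simpa using this
  have habel := hz.mul ((Real.tendsto_tsum_powerSeries_nhdsWithin_lt hl).comp hz')
  rw [one_mul] at habel
  have hq0 : Tendsto (fun δ ↦ Q δ + log δ) (nhdsWithin 0 (Set.Ioi 0)) (nhds 0) :=
    tendsto_tsum_eulerWeight_mul_rpow_add_log
  have hupp : Tendsto (fun δ ↦ Q δ + log (1 - exp (-δ))) (nhdsWithin 0 (Set.Ioi 0)) (nhds 0) := by
    have h1 := (tendsto_one_sub_exp_neg_div.log one_ne_zero).add hq0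
    rw [log_one, add_zero] at h1
    refine h1.congr' ?_
    filter_upwards [self_mem_nhdsWithin] with δ hδ
    have hδ : 0 < δ := hδ
    have : exp (-δ) < 1 := by simpa using hδ
    rw [log_div (by linarith) hδ.ne']
    ring
  have hlow : Tendsto (fun δ ↦ exp (-δ) * Q δ + log (1 - exp (-δ)))
      (nhdsWithin 0 (Set.Ioi 0)) (nhds 0) := by
    have h0 : Tendsto (fun δ : ℝ ↦ δ * log δ) (nhdsWithin 0 (Set.Ioi 0)) (nhds 0) := by
      have := (Real.continuous_mul_log.tendsto 0).mono_left
        (nhdsWithin_le_nhds (s := Set.Ioi (0 : ℝ)))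
      simpa using this
    have h1 := (hupp.add (tendsto_one_sub_exp_neg_div.mul h0)).add
      ((hz.sub_const 1).mul hq0)
    rw [mul_zero, mul_zero, add_zero, add_zero] at h1
    refine h1.congr' ?_
    filter_upwards [self_mem_nhdsWithin] with δ hδ
    have hδ : δ ≠ 0 := ne_of_gt hδ
    field_simp
    ring
  have hl0 : l = 0 := by
    refine tendsto_nhds_unique habel (tendsto_of_tendsto_of_tendsto_of_le_of_le' hlow hupp ?_ ?_)
    all_goals
      filter_upwards [self_mem_nhdsWithin] with δ hδ
      have hδ : 0 < δ := hδ
      obtain ⟨R, hR, hR1, hR2⟩ := exists_hasSum_primeBlock hδ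
      have hz0 := exp_pos (-δ)
      have hz1 : exp (-δ) < 1 := by simpa using hδ
      have hlog := hasSum_pow_div_log_of_abs_lt_one (x := exp (-δ)) (by rwa [abs_of_pos hz0])
      have h := (hR.mul_left (exp (-δ))).sub hlog
      have e : exp (-δ) * ∑' n, (b n - 1 / ((n : ℝ) + 1)) * exp (-δ) ^ n =
          exp (-δ) * R + log (1 - exp (-δ)) := by
        rw [← tsum_mul_left, ← sub_neg_eq_add, ← h.tsum_eq]
        refine tsum_congr fun n ↦ ?_
        rw [hb]
        ring
      simp only [Function.comp_apply]
      rw [e]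
    · have := mul_le_mul_of_nonneg_left hR2 hz0.le
      linarith
    · linarith
  rw [hl0] at hl
  have := hl.add tendsto_harmonic_sub_log
  rw [zero_add] at this
  refine this.congr fun K ↦ ?_
  rw [Finset.sum_sub_distrib, sum_range_sum_primeBlock, harmonic]
  push_cast
  simp only [one_div]
  ring

/-! ### The minimal order of the totient function -/

lemma eq_totient_mul_exp_sum (n : ℕ) :
    (n : ℝ) = n.totient * exp (∑ p ∈ n.primeFactors, eulerWeight p) := by
  have h : (n.totient : ℝ) = n * ∏ p ∈ n.primeFactors, (1 - (p : ℝ)⁻¹) := by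
    have := congrArg (fun q : ℚ ↦ (q : ℝ)) (Nat.totient_eq_mul_prod_factors n)
    push_cast at this
    exact this
  rw [h, exp_sum, mul_assoc, ← Finset.prod_mul_distrib, Finset.prod_eq_one, mul_one]
  intro p hp
  have hp' : (1 : ℝ) < p := by exact_mod_cast (Nat.prime_of_mem_primeFactors hp).one_lt
  have h1 : 0 < 1 - (p : ℝ)⁻¹ := sub_pos.mpr (inv_lt_one_of_one_lt₀ hp')
  rw [eulerWeight, exp_neg, exp_log h1, mul_inv_cancel₀ h1.ne']

/-- The prime factors of `n` beyond `y = log n` contribute little, because the logarithms of all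
prime factors of `n` add up to at most `y`. -/
lemma sum_primeFactors_eulerWeight_le {n : ℕ} (hn : 1 < log n) :
    ∑ p ∈ n.primeFactors, eulerWeight p ≤ ∑ p ∈ expPrimes ⌈log (log n)⌉₊, eulerWeight p +
      log n / ((log n - 1) * log (log n)) := by
  have hn0 : n ≠ 0 := by rintro rfl; norm_num at hn
  set y := log n with hy
  have hy0 : 0 < y := by linarith
  have hly : 0 < log y := log_pos hn
  have hd : 0 < (y - 1) * log y := mul_pos (by linarith) hly
  rw [← Finset.sum_filter_add_sum_filter_not n.primeFactors (· ∈ expPrimes ⌈log y⌉₊)]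
  refine add_le_add ?_ ?_
  · refine Finset.sum_le_sum_of_subset_of_nonneg (fun p hp ↦ (Finset.mem_filter.mp hp).2)
      fun p hp _ ↦ eulerWeight_nonneg (mem_expPrimes.mp hp).1.two_le
  · calc ∑ p ∈ n.primeFactors with p ∉ expPrimes ⌈log y⌉₊, eulerWeight p
        ≤ ∑ p ∈ n.primeFactors with p ∉ expPrimes ⌈log y⌉₊, log p / ((y - 1) * log y) := by
          refine Finset.sum_le_sum fun p hp ↦ ?_
          obtain ⟨hp, hpK⟩ := Finset.mem_filter.mp hp
          have hpp := Nat.prime_of_mem_primeFactors hp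
          have hp0 : (0 : ℝ) < p := by exact_mod_cast hpp.pos
          have hK : ⌈log y⌉₊ ≤ blockIndex p := by
            by_contra! h
            exact hpK (mem_expPrimes.mpr ⟨hpp, h⟩)
          have h1 : log y < log p := (Nat.ceil_le.mp hK).trans_lt (blockIndex_lt_log hpp.two_le)
          have h2 : y < p := (log_lt_log_iff hy0 hp0).mp h1
          refine (eulerWeight_le hpp.two_le).trans ?_
          rw [← one_div, div_le_div_iff₀ (by linarith) hd]
          nlinarith
      _ ≤ ∑ p ∈ n.primeFactors, log p / ((y - 1) * log y) :=
          Finset.sum_le_sum_of_subset_of_nonneg (Finset.filter_subset _ _)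
            fun p _ _ ↦ div_nonneg (log_natCast_nonneg p) hd.le
      _ = log (∏ p ∈ n.primeFactors, p : ℕ) / ((y - 1) * log y) := by
          rw [← Finset.sum_div, Nat.cast_prod, log_prod fun p hp ↦
            Nat.cast_ne_zero.mpr (Nat.prime_of_mem_primeFactors hp).ne_zero]
      _ ≤ y / ((y - 1) * log y) := by
          refine div_le_div_of_nonneg_right (log_le_log ?_ ?_) hd.le
          · exact_mod_cast Nat.pos_of_dvd_of_pos n.prod_primeFactors_dvd (Nat.pos_of_ne_zero hn0)
          · exact_mod_cast Nat.le_of_dvd (Nat.pos_of_ne_zero hn0) n.prod_primeFactors_dvd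

lemma tendsto_totient_bound : Tendsto (fun y : ℝ ↦
    ∑ p ∈ expPrimes ⌈log y⌉₊, eulerWeight p - log (log y) + y / ((y - 1) * log y)) atTop
      (nhds eulerMascheroniConstant) := by
  have h1 : Tendsto (fun y : ℝ ↦ ∑ p ∈ expPrimes ⌈log y⌉₊, eulerWeight p -
      log (⌈log y⌉₊ : ℕ)) atTop (nhds eulerMascheroniConstant) :=
    tendsto_sum_expPrimes_sub_log.comp (tendsto_nat_ceil_atTop.comp tendsto_log_atTop)
  have h2 : Tendsto (fun y : ℝ ↦ log ((⌈log y⌉₊ : ℝ) / log y)) atTop (nhds 0) := by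
    have := ((tendsto_nat_ceil_div_atTop (R := ℝ)).comp tendsto_log_atTop).log one_ne_zero
    rwa [log_one] at this
  have h3 : Tendsto (fun y : ℝ ↦ (1 + (y - 1)⁻¹) * (log y)⁻¹) atTop (nhds 0) := by
    have ha : Tendsto (fun y : ℝ ↦ y - 1) atTop atTop := tendsto_atTop_add_const_right _ _ tendsto_id
    have := ((tendsto_inv_atTop_zero.comp ha).const_add 1).mul
      (tendsto_inv_atTop_zero.comp tendsto_log_atTop)
    rwa [mul_zero] at this
  have := (h1.add h2).add h3
  rw [add_zero, add_zero] at this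
  refine this.congr' ?_
  filter_upwards [eventually_gt_atTop 1] with y hy
  have hly : 0 < log y := log_pos hy
  have hc : (0 : ℝ) < (⌈log y⌉₊ : ℕ) := by exact_mod_cast Nat.ceil_pos.mpr hly
  have hy1 : y - 1 ≠ 0 := by linarith
  rw [log_div hc.ne' hly.ne']
  field_simp
  ring

/-- Landau's bound for the minimal order of the totient function. -/
lemma eventually_le_mul_totient_mul_log_log {C : ℝ} (hC : exp eulerMascheroniConstant < C) :
    ∀ᶠ n : ℕ in atTop, (n : ℝ) ≤ C * n.totient * log (log n) := by
  have hlog : Tendsto (fun n : ℕ ↦ log n) atTop atTop :=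
    tendsto_log_atTop.comp tendsto_natCast_atTop_atTop
  have h := ((continuous_exp.tendsto _).comp (tendsto_totient_bound.comp hlog)).eventually_lt_const
    hC
  filter_upwards [h, hlog.eventually_gt_atTop 1] with n hn hn1
  have hll : 0 < log (log n) := log_pos hn1
  have hs := sum_primeFactors_eulerWeight_le hn1
  calc (n : ℝ) = n.totient * exp (∑ p ∈ n.primeFactors, eulerWeight p) :=
        eq_totient_mul_exp_sum n
    _ ≤ n.totient * (C * log (log n)) := by
        refine mul_le_mul_of_nonneg_left ?_ (Nat.cast_nonneg _)
        refine le_trans ?_ (mul_le_mul_of_nonneg_right hn.le hll.le)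
        simp only [Function.comp_apply]
        conv_rhs => rw [← exp_log hll, ← exp_add]
        rw [exp_le_exp, exp_log hll]
        linarith
    _ = C * n.totient * log (log n) := by ring

/-- A bound `b ≤ C * B * log log b` is turned into one in terms of `log log B`: it forces
`b ≤ B^3`, hence `log log b ≤ log log B + log 3`. -/
lemma log_log_le_of_le_mul_log_log {b B C : ℝ} (hb : 1 < b) (hC : 0 < C)
    (hB : 1 < B) (hCB : 4 * C ^ 2 ≤ B) (h : b ≤ C * B * log (log b)) :
    log (log b) ≤ log (log B) + log 3 := by
  have hb0 : 0 < b := by linarith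
  have hB0 : 0 < B := by linarith
  have hlb : 0 < log b := log_pos hb
  have hlB : 0 < log B := log_pos hB
  have h1 : log (log b) ≤ 2 * √b := by
    have := log_le_sub_one_of_pos hlb
    have h2 := log_le_sub_one_of_pos (sqrt_pos.mpr hb0)
    rw [log_sqrt hb0.le] at h2
    linarith
  have h2 : √b * √b ≤ (2 * C * B) * √b := by
    rw [mul_self_sqrt hb0.le]
    have := mul_le_mul_of_nonneg_left h1 (by positivity : 0 ≤ C * B)
    linarith
  have h3 : √b ≤ 2 * C * B := le_of_mul_le_mul_right h2 (sqrt_pos.mpr hb0)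
  have h4 : b ≤ B ^ 3 := by
    calc b = √b ^ 2 := (sq_sqrt hb0.le).symm
      _ ≤ (2 * C * B) ^ 2 := pow_le_pow_left₀ (sqrt_nonneg b) h3 2
      _ = 4 * C ^ 2 * B ^ 2 := by ring
      _ ≤ B * B ^ 2 := by gcongr
      _ = B ^ 3 := by ring
  have h5 := log_le_log hb0 h4
  rw [log_pow] at h5
  rw [← log_mul hlB.ne' (by norm_num)]
  refine log_le_log hlb ?_
  push_cast at h5
  linarith

/-- For every `ε > 0` there exists `B₀` such that for all `B ≥ B₀` and every positive
integer `b` with `φ(b) ≤ B`, one has `b ≤ (e^γ + ε)·B·log log B`. -/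
theorem totient_le_imp_le (ε : ℝ) (hε : 0 < ε) :
    ∃ B₀ : ℝ, ∀ B : ℝ, B₀ ≤ B → ∀ b : ℕ, 0 < b → (Nat.totient b : ℝ) ≤ B →
      (b : ℝ) ≤ (Real.exp Real.eulerMascheroniConstant + ε) * B * Real.log (Real.log B) := by
  set E := exp eulerMascheroniConstant with hE
  have hE1 : 1 ≤ E := one_le_exp (by linarith [one_half_lt_eulerMascheroniConstant])
  set C := E + ε / 2 with hC
  have hC0 : 0 < C := by positivity
  obtain ⟨n₀, hn₀⟩ := eventually_atTop.mp
    (eventually_le_mul_totient_mul_log_log (C := C) (by linarith))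
  have hll : Tendsto (fun B : ℝ ↦ log (log B)) atTop atTop :=
    tendsto_log_atTop.comp tendsto_log_atTop
  obtain ⟨B₀, hB₀⟩ := eventually_atTop.mp
    ((((eventually_gt_atTop 1).and (eventually_ge_atTop ((n₀ : ℝ) + 3))).and
      (eventually_ge_atTop (4 * C ^ 2))).and
      ((hll.eventually_ge_atTop 1).and (hll.eventually_ge_atTop (C * log 3 / (ε / 2)))))
  refine ⟨B₀, fun B hB b hb hφ ↦ ?_⟩
  obtain ⟨⟨⟨hB1, hBn⟩, hBC⟩, hL1, hL⟩ := hB₀ B hB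
  rw [div_le_iff₀ (by positivity)] at hL
  by_cases hbn : n₀ ≤ b ∧ 3 ≤ b
  · have hb3 : (3 : ℝ) ≤ b := by exact_mod_cast hbn.2
    have hlb : 0 ≤ log (log b) := by
      refine log_nonneg ((le_log_iff_exp_le (by linarith)).mpr ?_)
      linarith [exp_one_lt_d9]
    have h1 : (b : ℝ) ≤ C * B * log (log b) := (hn₀ b hbn.1).trans (by gcongr)
    have h2 := log_log_le_of_le_mul_log_log (by linarith) hC0 hB1 hBC h1
    calc (b : ℝ) ≤ C * B * log (log b) := h1
      _ ≤ C * B * (log (log B) + log 3) := by gcongr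
      _ = B * (C * log (log B) + C * log 3) := by ring
      _ ≤ B * (C * log (log B) + log (log B) * (ε / 2)) := by gcongr
      _ = (E + ε) * B * log (log B) := by rw [hC]; ring
  · have h1 : (b : ℝ) ≤ n₀ + 3 := by
      have : b ≤ n₀ + 3 := by omega
      exact_mod_cast this
    calc (b : ℝ) ≤ 1 * B * 1 := by linarith
      _ ≤ (E + ε) * B * log (log B) := by gcongr; linarith
end

section
/- For all integers i and k with 1 ≤ i ≤ s and 0 ≤ k ≤ n, the number d_n^{s+1−i}·a_{i,k} is an integer, where d_n = lcm(1, 2, …, n). -/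
/-!
Fix a pole `t = -k` and put `X = t + k`. The coefficient `a i k` is the coefficient of
`X^{s+1-i}` in the Taylor series of `R_n(t) (t+k)^{s+1}` at `X = 0`
(`exists_polynomial_identity`, `coeff_eq_of_polynomial_identity`). Writing `d` for `d_n`, it is
therefore enough that this series has integer coefficients after the substitution `X ↦ d X`. Series
with that property form a ring, `scaledInt d`, so the factors can be treated one by one.

* `X - k - r n` is an integer polynomial, since `r n` is an integer.
* `n! / ∏_{j ≠ k} (X + j - k)` is the integer `± choose n k` times the geometric series
  `1 / (1 + X/(j-k))`, and `j - k` divides `d` (`exists_inverse_mem_scaledInt`).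
* With `m = n / den r`, the product over `j` attached to `θ = a/b` splits into `den(r)(2r+1)`
  blocks of `m` consecutive factors. Each block gets one `m!` from the denominator and one factor
  `b^m ∏_{p ∣ b} p^{m/(p-1)}` from `A₁ⁿ A₂ⁿ` (`A1_pow_mul_A2_pow`; the exponents are integers
  because `p - 1` divides `m`). By Vandermonde's identity the block is a combination of the
  polynomials `choose X i` with `i ≤ m`, whose coefficients are integer multiples of
  `b^m ∏_{p ∣ b} p^{m/(p-1)}` times binomials `choose (A/b) l` with `l ≤ m`
  (`block_mem_scaledIntPoly`). These coefficients are integers: Legendre's formula handles the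
  primes dividing `b`, and modulo the part of `l!` prime to `b` the product `∏ (A - j b)` is a
  multiple of `l` consecutive integers (`factorial_dvd_primeFactors_mul_prod`).
  Finally `choose X i = (X/i) ∏_{l < i} (X/l - 1)` visibly lies in the ring
  (`choose_mem_scaledIntPoly`).
-/


open Finset Filter Real

noncomputable section

/-- The zero set `𝓕_B`: rationals `a/b` with `b ∈ Ψ`, `1 ≤ a ≤ b`, `gcd(a,b)=1`. -/
def zeroSet (Psi : Finset ℕ) : Finset ℚ :=
  Psi.biUnion fun b =>
    ((Finset.Icc 1 b).filter fun a => Nat.Coprime a b).image fun a : ℕ => (a : ℚ) / b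

/-- `P_{B,den(r)} = 2·den(r)·LCM{p−1 : p prime, p ∣ b for some b ∈ Ψ}`. -/
def Pconst (Psi : Finset ℕ) (r : ℚ) : ℕ :=
  2 * r.den * (Psi.biUnion Nat.primeFactors).lcm (fun p => p - 1)

/-- The major arithmetic factor `A₁(B) = ∏_{b ∈ Ψ} b^{(2r+1)φ(b)}`. -/
def A1 (Psi : Finset ℕ) (r : ℚ) : ℝ :=
  ∏ b ∈ Psi, (b : ℝ) ^ ((2 * (r : ℝ) + 1) * (Nat.totient b : ℝ))

/-- The minor arithmetic factor `A₂(B) = ∏_{b ∈ Ψ} ∏_{p ∣ b} p^{(2r+1)φ(b)/(p−1)}`. -/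
def A2 (Psi : Finset ℕ) (r : ℚ) : ℝ :=
  ∏ b ∈ Psi, ∏ p ∈ b.primeFactors,
    (p : ℝ) ^ ((2 * (r : ℝ) + 1) * (Nat.totient b : ℝ) / ((p : ℝ) - 1))

/-- The auxiliary rational function
`R_n(t) = A₁ⁿA₂ⁿ · (n!^{s+1}/((n/den(r))!)^{den(r)(2r+1)|𝓕_B|}) · (t−rn)·
∏_{θ∈𝓕_B}∏_{j=0}^{(2r+1)n−1}(t−rn+j+θ) / ∏_{j=0}^{n}(t+j)^{s+1}`.  Here, assuming
`P_{B,den(r)} ∣ n`, `(2r+1)n = 2·num(r)·(n/den(r)) + n` and `den(r)(2r+1) = 2·num(r)+den(r)`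
are the indicated natural numbers (the divisions are exact). -/
def Rfun (Psi : Finset ℕ) (r : ℚ) (s n : ℕ) (t : ℝ) : ℝ :=
  A1 Psi r ^ n * A2 Psi r ^ n *
    ((n.factorial : ℝ) ^ (s + 1) /
      (((n / r.den).factorial : ℝ)) ^ ((2 * r.num.toNat + r.den) * (zeroSet Psi).card)) *
    ((t - (r : ℝ) * n) *
      ∏ θ ∈ zeroSet Psi, ∏ j ∈ Finset.range (2 * (r.num.toNat * (n / r.den)) + n),
        (t - (r : ℝ) * n + (j : ℝ) + (θ : ℝ))) /
    ∏ j ∈ Finset.range (n + 1), (t + (j : ℝ)) ^ (s + 1)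


/-- `d_n = lcm(1, 2, …, n)`. -/
def dlcm (n : ℕ) : ℕ := (Finset.Icc 1 n).lcm id

/-! ### Denominators of binomials of a rational number -/

section Denominators

/-- The factor `b^m · ∏_{p ∣ b} p^{m/(p-1)}` that clears the denominators of
`∏_{j<m} (x + A/b + j) / m!` (with floors in the exponents; when every `p - 1`
divides `m` they are exact, and the product of these factors is `A₁ⁿ A₂ⁿ`). -/
def clearing (b m : ℕ) : ℕ := b ^ m * ∏ p ∈ b.primeFactors, p ^ (m / (p - 1))

/-- The part of `l!` built from primes dividing `b` is bounded by Legendre's formula; modulo the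
remaining part `b` is invertible, so `∏ (A - j b)` is a multiple of a product of `l` consecutive
integers. -/
lemma factorial_dvd_primeFactors_mul_prod (b m l : ℕ) (hb : 0 < b) (hl : l ≤ m) (A : ℤ) :
    (l.factorial : ℤ) ∣
      ((∏ p ∈ b.primeFactors, p ^ (m / (p - 1)) : ℕ) : ℤ) * ∏ j ∈ range l, (A - j * b) := by
  set N := l.factorial with hN
  have hN0 : N ≠ 0 := l.factorial_ne_zero
  set u := ∏ p ∈ N.primeFactors with p ∣ b, p ^ N.factorization p with hu
  set w := ∏ p ∈ N.primeFactors with ¬ p ∣ b, p ^ N.factorization p with hw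
  have huw : N = u * w := by
    rw [hu, hw, Finset.prod_filter_mul_prod_filter_not]
    exact (Nat.prod_factorization_pow_eq_self hN0).symm
  have h1 : u ∣ ∏ p ∈ b.primeFactors, p ^ (m / (p - 1)) := by
    have hsub : (N.primeFactors.filter fun p => p ∣ b) ⊆ b.primeFactors := by
      intro p hp
      rw [Finset.mem_filter, Nat.mem_primeFactors] at hp
      exact Nat.mem_primeFactors.2 ⟨hp.1.1, hp.2, hb.ne'⟩
    refine dvd_trans (Finset.prod_dvd_prod_of_dvd _ (fun p => p ^ (m / (p - 1))) ?_)
      (Finset.prod_dvd_prod_of_subset _ _ _ hsub)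
    intro p hp
    have hpp : p.Prime := Nat.prime_of_mem_primeFactors (hsub hp)
    have := Fact.mk hpp
    refine pow_dvd_pow _ ?_
    rw [Nat.le_div_iff_mul_le (by have := hpp.two_le; omega), mul_comm,
      Nat.factorization_def _ hpp, sub_one_mul_padicValNat_factorial]
    omega
  have h2 : (w : ℤ) ∣ ∏ j ∈ range l, (A - j * b) := by
    have hcop : Nat.Coprime b w := by
      refine Nat.Coprime.prod_right fun p hp => ?_
      rw [Finset.mem_filter, Nat.mem_primeFactors] at hp
      exact Nat.Coprime.pow_right _ (((Nat.Prime.coprime_iff_not_dvd hp.1.1).2 hp.2).symm)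
    obtain ⟨x, y, hxy⟩ := (Nat.isCoprime_iff_coprime.2 hcop)
    -- `x` inverts `b` modulo `w`, so `A ≡ b (A x)`.
    have hmod : ∏ j ∈ range l, (A - j * b) ≡ ∏ j ∈ range l, (b * (A * x - j)) [ZMOD w] := by
      refine Int.ModEq.prod fun j _ => ?_
      rw [Int.modEq_iff_dvd]
      refine ⟨- (A * y), ?_⟩
      linear_combination A * hxy
    refine (Int.ModEq.dvd_iff hmod).2 ?_
    rw [Finset.prod_mul_distrib]
    refine Dvd.dvd.mul_left ?_ _
    have h3 : ∏ j ∈ range l, (A * x - j) = ∏ j ∈ range l, (A * x - (l - 1 : ℤ) + j) := by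
      rw [← Finset.prod_range_reflect]
      refine Finset.prod_congr rfl fun j hj => ?_
      have := Finset.mem_range.1 hj
      push_cast [Nat.sub_sub, Nat.cast_sub (show 1 + j ≤ l by omega)]
      ring
    rw [h3]
    exact dvd_trans (Int.natCast_dvd_natCast.2 ⟨u, by rw [← hN, huw, mul_comm]⟩)
      (Nat.factorial_coe_dvd_prod l _)
  rw [huw]
  push_cast
  exact mul_dvd_mul (by exact_mod_cast h1) h2

/-- `clearing b m` clears the denominator of the generalized binomial coefficient of `A/b` over any
`l ≤ m`. -/
lemma clearing_mul_choose_isInt (b m l : ℕ) (hb : 0 < b) (hl : l ≤ m) (A : ℤ) :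
    ∃ z : ℤ, (clearing b m : ℚ) * ((∏ j ∈ range l, ((A : ℚ) / b - j)) / l.factorial) = z := by
  obtain ⟨z, hz⟩ := factorial_dvd_primeFactors_mul_prod b m l hb hl A
  refine ⟨b ^ (m - l) * z, ?_⟩
  have hb' : (b : ℚ) ≠ 0 := by positivity
  have hf : (l.factorial : ℚ) ≠ 0 := by positivity
  have h1 : (∏ j ∈ range l, ((A : ℚ) - j * b)) = b ^ l * ∏ j ∈ range l, ((A : ℚ) / b - j) := by
    rw [← Finset.card_range l, ← Finset.prod_const, Finset.card_range, ← Finset.prod_mul_distrib]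
    refine Finset.prod_congr rfl fun j _ => ?_
    field_simp
  have hz' := congrArg (Int.cast : ℤ → ℚ) hz
  push_cast at hz'
  rw [h1] at hz'
  have h2 : (b : ℚ) ^ m = b ^ (m - l) * b ^ l := by rw [← pow_add, Nat.sub_add_cancel hl]
  rw [clearing]
  push_cast
  rw [h2]
  generalize ∏ j ∈ range l, ((A : ℚ) / b - j) = Q at *
  field_simp
  linear_combination hz'

end Denominators

/-! ### Series with integer coefficients after rescaling the variable -/

section ScaledInt

/-- The power series `f` over `ℚ` such that `f(d X)` has integer coefficients. -/
def scaledInt (d : ℕ) : Subring (PowerSeries ℚ) :=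
  ((PowerSeries.map (Int.castRingHom ℚ)).range).comap (PowerSeries.rescale (d : ℚ))

lemma mem_scaledInt {d : ℕ} {f : PowerSeries ℚ} :
    f ∈ scaledInt d ↔ ∀ j, ∃ z : ℤ, (d : ℚ) ^ j * PowerSeries.coeff j f = z := by
  rw [scaledInt, Subring.mem_comap, RingHom.mem_range]
  constructor
  · rintro ⟨g, hg⟩ j
    refine ⟨PowerSeries.coeff j g, ?_⟩
    rw [← PowerSeries.coeff_rescale, ← hg]
    simp
  · intro h
    choose z hz using h
    refine ⟨PowerSeries.mk z, ?_⟩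
    ext j
    simp [PowerSeries.coeff_rescale, hz]

/-- Polynomials over `ℚ` lying in `scaledInt d`. -/
def scaledIntPoly (d : ℕ) : Subring (Polynomial ℚ) :=
  (scaledInt d).comap Polynomial.coeToPowerSeries.ringHom

lemma mem_scaledIntPoly {d : ℕ} {f : Polynomial ℚ} :
    f ∈ scaledIntPoly d ↔ ∀ j, ∃ z : ℤ, (d : ℚ) ^ j * f.coeff j = z := by
  rw [scaledIntPoly, Subring.mem_comap, mem_scaledInt]
  simp

lemma C_mem_scaledIntPoly (d : ℕ) (q : ℚ) (h : ∃ z : ℤ, q = z) :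
    Polynomial.C q ∈ scaledIntPoly d := by
  obtain ⟨z, rfl⟩ := h
  have : (Polynomial.C (z : ℚ)) = ((z : ℤ) : Polynomial ℚ) := by simp
  rw [this]
  exact intCast_mem _ z

lemma C_mul_X_mem_scaledIntPoly (d : ℕ) (q : ℚ) (h : ∃ z : ℤ, d * q = z) :
    Polynomial.C q * Polynomial.X ∈ scaledIntPoly d := by
  obtain ⟨z, hz⟩ := h
  rw [mem_scaledIntPoly]
  intro j
  rw [Polynomial.coeff_C_mul_X]
  split_ifs with hj
  · subst hj; exact ⟨z, by rw [pow_one, hz]⟩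
  · exact ⟨0, by simp⟩

lemma X_mem_scaledIntPoly (d : ℕ) : (Polynomial.X : Polynomial ℚ) ∈ scaledIntPoly d := by
  simpa using C_mul_X_mem_scaledIntPoly d 1 ⟨d, by simp⟩

/-- The geometric series `1 / (1 - q X)`. -/
lemma mk_pow_mem_scaledInt (d : ℕ) (q : ℚ) (h : ∃ z : ℤ, d * q = z) :
    PowerSeries.mk (fun j => q ^ j) ∈ scaledInt d := by
  obtain ⟨z, hz⟩ := h
  rw [mem_scaledInt]
  intro j
  exact ⟨z ^ j, by rw [PowerSeries.coeff_mk, ← mul_pow, hz]; push_cast; rfl⟩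

lemma mul_one_div_isInt {d l : ℕ} (h : l ∣ d) : ∃ z : ℤ, (d : ℚ) * (1 / l) = z := by
  obtain ⟨c, rfl⟩ := h
  rcases Nat.eq_zero_or_pos l with rfl | hl
  · exact ⟨0, by simp⟩
  · exact ⟨c, by push_cast; field_simp⟩

/-- `X(X-1)⋯(X-i+1)/i!` factors as `(X/i) ∏_{1 ≤ l < i} (X/l - 1)`, and each factor becomes
integral under `X ↦ d X` as soon as every `l ≤ i` divides `d`. -/
lemma choose_mem_scaledIntPoly (d i : ℕ) (h : ∀ l, 1 ≤ l → l ≤ i → l ∣ d) :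
    Polynomial.C (1 / (i.factorial : ℚ)) *
      ∏ j ∈ range i, (Polynomial.X - Polynomial.C (j : ℚ)) ∈ scaledIntPoly d := by
  cases i with
  | zero => simp
  | succ i =>
    have key : Polynomial.C (1 / ((i + 1).factorial : ℚ)) *
        ∏ j ∈ range (i + 1), (Polynomial.X - Polynomial.C (j : ℚ)) =
        (Polynomial.C (1 / ((i + 1 : ℕ) : ℚ)) * Polynomial.X) *
          ∏ j ∈ range i, (Polynomial.C (1 / ((j + 1 : ℕ) : ℚ)) * Polynomial.X - 1) := by
      have e1 : ∀ j ∈ range i, (Polynomial.C (1 / ((j + 1 : ℕ) : ℚ)) * Polynomial.X - 1) =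
          Polynomial.C (1 / ((j + 1 : ℕ) : ℚ)) *
            (Polynomial.X - Polynomial.C ((j + 1 : ℕ) : ℚ)) := by
        intro j _
        have : ((j + 1 : ℕ) : ℚ) ≠ 0 := by positivity
        rw [mul_sub, ← Polynomial.C_mul, one_div_mul_cancel this, Polynomial.C_1]
      rw [Finset.prod_congr rfl e1, Finset.prod_mul_distrib, Finset.prod_range_succ']
      have e2 : ∏ j ∈ range i, Polynomial.C (1 / ((j + 1 : ℕ) : ℚ)) =
          Polynomial.C (1 / (i.factorial : ℚ)) := by
        rw [← map_prod, Finset.prod_div_distrib, ← Finset.prod_range_add_one_eq_factorial]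
        push_cast
        simp
      rw [e2, Nat.factorial_succ]
      push_cast
      rw [← one_div_mul_one_div]
      simp only [Polynomial.C_mul, Polynomial.C_0]
      ring
    rw [key]
    refine mul_mem (C_mul_X_mem_scaledIntPoly _ _ (mul_one_div_isInt (h _ (by omega) le_rfl)))
      (prod_mem fun j hj => sub_mem (C_mul_X_mem_scaledIntPoly _ _
        (mul_one_div_isInt (h _ (by omega) ?_))) (one_mem _))
    have := Finset.mem_range.1 hj
    omega

lemma descPochhammer_smeval_eq_prod {R : Type*} [CommRing R] (x : R) (k : ℕ) :
    (descPochhammer ℤ k).smeval x = ∏ j ∈ range k, (x - (j : R)) := by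
  induction k with
  | zero => simp
  | succ k ih =>
    rw [descPochhammer_succ_right, Polynomial.smeval_mul, ih, Finset.prod_range_succ,
      Polynomial.smeval_sub, Polynomial.smeval_X, Polynomial.smeval_natCast]
    simp

/-- The scaled block `clearing b m · ∏_{j<m} (X + A/b + j) / m!`. By Vandermonde it is a
combination of the polynomials `X(X-1)⋯(X-i+1)/i!` with coefficients the cleared
binomials of the rational number `A/b + m - 1`. -/
lemma block_mem_scaledIntPoly (d b m : ℕ) (hb : 0 < b) (h : ∀ l, 1 ≤ l → l ≤ m → l ∣ d)
    (c : ℚ) (hc : ∃ A : ℤ, c = A / b) :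
    Polynomial.C ((clearing b m : ℚ) / m.factorial) *
      ∏ j ∈ range m, (Polynomial.X + Polynomial.C (c + j)) ∈ scaledIntPoly d := by
  obtain ⟨A, hA⟩ := hc
  have hb' : (b : ℚ) ≠ 0 := by positivity
  set c' : ℚ := ((A + b * ((m : ℤ) - 1) : ℤ) : ℚ) / b with hc'
  have e1 : ∏ j ∈ range m, (Polynomial.X + Polynomial.C (c + j)) =
      (descPochhammer ℤ m).smeval ((Polynomial.X : Polynomial ℚ) + Polynomial.C c') := by
    rw [descPochhammer_smeval_eq_prod, ← Finset.prod_range_reflect]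
    refine Finset.prod_congr rfl fun j hj => ?_
    have := Finset.mem_range.1 hj
    have e : c + ((m - 1 - j : ℕ) : ℚ) = c' - j := by
      rw [hc', hA, Nat.sub_sub, Nat.cast_sub (by omega)]
      push_cast
      field_simp
      ring
    rw [e, Polynomial.C_sub, Polynomial.C_eq_natCast]
    ring
  rw [e1, Ring.descPochhammer_smeval_add _ (Commute.all _ _), Finset.mul_sum]
  refine sum_mem fun ij hij => ?_
  obtain ⟨i, l⟩ := ij
  rw [Finset.HasAntidiagonal.mem_antidiagonal] at hij
  simp only at hij ⊢
  rw [descPochhammer_smeval_eq_prod, descPochhammer_smeval_eq_prod]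
  have e2 : Polynomial.C ((clearing b m : ℚ) / m.factorial) * ((m.choose i : Polynomial ℚ) *
      ((∏ j ∈ range i, (Polynomial.X - (j : Polynomial ℚ))) *
        ∏ j ∈ range l, (Polynomial.C c' - (j : Polynomial ℚ)))) =
      (Polynomial.C (1 / (i.factorial : ℚ)) *
        ∏ j ∈ range i, (Polynomial.X - Polynomial.C (j : ℚ))) *
      Polynomial.C ((clearing b m : ℚ) * ((∏ j ∈ range l, (c' - j)) / l.factorial)) := by
    have e3 : ∏ j ∈ range l, (Polynomial.C c' - (j : Polynomial ℚ)) =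
        Polynomial.C (∏ j ∈ range l, (c' - j)) := by
      rw [map_prod]; simp
    have e4 : ((clearing b m : ℚ) / m.factorial) * m.choose i * ∏ j ∈ range l, (c' - j) =
        (1 / (i.factorial : ℚ)) *
          ((clearing b m : ℚ) * ((∏ j ∈ range l, (c' - j)) / l.factorial)) := by
      have hch : (m.choose i : ℚ) * i.factorial * l.factorial = m.factorial := by
        have := Nat.choose_mul_factorial_mul_factorial (show i ≤ m by omega)
        rw [show m - i = l by omega] at this
        exact_mod_cast this
      have h0 := Nat.factorial_ne_zero m
      have h1 := Nat.factorial_ne_zero i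
      have h2 := Nat.factorial_ne_zero l
      field_simp
      linear_combination (clearing b m : ℚ) * (∏ j ∈ range l, (c' - j)) * hch
    have e5 := congrArg (Polynomial.C : ℚ → Polynomial ℚ) e4
    simp only [Polynomial.C_mul] at e5
    rw [e3]
    simp only [Polynomial.C_eq_natCast, Polynomial.C_mul] at e5 ⊢
    linear_combination (∏ j ∈ range i, (Polynomial.X - (j : Polynomial ℚ))) * e5
  rw [e2]
  exact mul_mem (choose_mem_scaledIntPoly d i fun l hl hl' => h l hl (by omega))
    (C_mem_scaledIntPoly _ _ (clearing_mul_choose_isInt b m l hb (by omega) _))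

end ScaledInt

/-! ### Expansion of the inverse denominator at a pole -/

section Expansion

lemma dvd_dlcm {n l : ℕ} (h1 : 1 ≤ l) (h2 : l ≤ n) : l ∣ dlcm n :=
  Finset.dvd_lcm (f := id) (Finset.mem_Icc.2 ⟨h1, h2⟩)

lemma mul_one_div_dlcm_isInt {n : ℕ} {c : ℤ} (h1 : c ≠ 0) (h2 : c.natAbs ≤ n) :
    ∃ z : ℤ, (dlcm n : ℚ) * (-1 / (c : ℚ)) = z := by
  obtain ⟨e, he⟩ := Int.natAbs_dvd.1
    (Int.natCast_dvd_natCast.2 (dvd_dlcm (by omega : 1 ≤ c.natAbs) h2))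
  refine ⟨-e, ?_⟩
  have hc : (c : ℚ) ≠ 0 := by exact_mod_cast h1
  have he' : (dlcm n : ℚ) = c * e := by exact_mod_cast he
  rw [he']
  push_cast
  field_simp

/-- The product is `(-1)^k k! (n-k)!`. -/
lemma prod_erase_dvd_factorial (n k : ℕ) (hk : k ≤ n) :
    ∏ j ∈ (range (n + 1)).erase k, ((j : ℤ) - k) ∣ (n.factorial : ℤ) := by
  have e1 : ∏ j ∈ (range (n + 1)).erase k, ((j : ℤ) - k) =
      ∏ j ∈ range (n + 1), if j = k then 1 else ((j : ℤ) - k) := by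
    rw [← Finset.mul_prod_erase (range (n + 1)) _ (Finset.mem_range.2 (by omega : k < n + 1)),
      if_pos rfl, one_mul]
    exact Finset.prod_congr rfl fun j hj => (if_neg (Finset.ne_of_mem_erase hj)).symm
  have e2 : ∏ j ∈ range k, (if j = k then 1 else ((j : ℤ) - k)) = (-1) ^ k * k.factorial := by
    rw [← Finset.prod_range_reflect, ← Finset.prod_range_add_one_eq_factorial]
    push_cast
    rw [← Finset.card_range k, ← Finset.prod_const, Finset.card_range, ← Finset.prod_mul_distrib]
    refine Finset.prod_congr rfl fun j hj => ?_
    have := Finset.mem_range.1 hj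
    rw [if_neg (by omega)]
    omega
  have e3 : ∏ j ∈ range (n - k), (if k + (j + 1) = k then 1 else (((k + (j + 1) : ℕ) : ℤ) - k)) =
      (n - k).factorial := by
    rw [← Finset.prod_range_add_one_eq_factorial]
    push_cast
    refine Finset.prod_congr rfl fun j hj => ?_
    rw [if_neg (by omega)]
    ring
  rw [e1, show n + 1 = k + ((n - k) + 1) by omega, Finset.prod_range_add, e2,
    Finset.prod_range_succ', e3, add_zero, if_pos rfl, mul_one]
  refine ⟨(-1) ^ k * n.choose k, ?_⟩
  have h1 := Nat.choose_mul_factorial_mul_factorial hk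
  have h2 : ((-1 : ℤ) ^ k) * (-1) ^ k = 1 := by rw [← mul_pow]; simp
  zify at h1
  linear_combination -h1 - (n.choose k : ℤ) * k.factorial * (n - k).factorial * h2

/-- The expansion of `n! / ∏_{j ≠ k} (X + j - k)` at the pole `t = -k`. -/
lemma exists_inverse_mem_scaledInt (n k : ℕ) (hk : k ≤ n) :
    ∃ H ∈ scaledInt (dlcm n),
      H * ((∏ j ∈ (range (n + 1)).erase k,
        (Polynomial.X + Polynomial.C ((j : ℚ) - k)) : Polynomial ℚ) : PowerSeries ℚ) =
      PowerSeries.C (n.factorial : ℚ) := by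
  obtain ⟨z, hz⟩ := prod_erase_dvd_factorial n k hk
  refine ⟨(z : PowerSeries ℚ) * ∏ j ∈ (range (n + 1)).erase k,
    PowerSeries.mk (fun i => (-1 / (((j : ℤ) - k : ℤ) : ℚ)) ^ i), ?_, ?_⟩
  · refine mul_mem (intCast_mem _ _) (prod_mem fun j hj => mk_pow_mem_scaledInt _ _ ?_)
    rw [Finset.mem_erase, Finset.mem_range] at hj
    exact mul_one_div_dlcm_isInt (by omega) (by omega)
  · have e1 : ∀ j ∈ (range (n + 1)).erase k,
        PowerSeries.mk (fun i => (-1 / (((j : ℤ) - k : ℤ) : ℚ)) ^ i) *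
          (PowerSeries.X + PowerSeries.C ((j : ℚ) - k)) = PowerSeries.C ((j : ℚ) - k) := by
      intro j hj
      have hc : (j : ℚ) - k ≠ 0 := by
        rw [sub_ne_zero]; exact_mod_cast Finset.ne_of_mem_erase hj
      ext i
      rw [mul_add, map_add, PowerSeries.coeff_mul_C]
      cases i with
      | zero => simp
      | succ i =>
        rw [PowerSeries.coeff_succ_mul_X, PowerSeries.coeff_mk, PowerSeries.coeff_mk,
          PowerSeries.coeff_C, if_neg (by omega), pow_succ]
        push_cast
        field_simp
        ring
    have e2 : ((∏ j ∈ (range (n + 1)).erase k,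
        (Polynomial.X + Polynomial.C ((j : ℚ) - k)) : Polynomial ℚ) : PowerSeries ℚ) =
        ∏ j ∈ (range (n + 1)).erase k, (PowerSeries.X + PowerSeries.C ((j : ℚ) - k)) := by
      rw [← Polynomial.coeToPowerSeries.ringHom_apply, map_prod]
      refine Finset.prod_congr rfl fun j _ => ?_
      rw [Polynomial.coeToPowerSeries.ringHom_apply, Polynomial.coe_add, Polynomial.coe_X,
        Polynomial.coe_C]
    rw [e2, mul_assoc, ← Finset.prod_mul_distrib, Finset.prod_congr rfl e1, ← map_prod]
    have hz' : (n.factorial : ℚ) = (∏ j ∈ (range (n + 1)).erase k, ((j : ℚ) - k)) * z := by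
      exact_mod_cast congrArg (Int.cast : ℤ → ℚ) hz
    rw [hz', map_mul, mul_comm]
    congr 1
    exact (map_intCast (PowerSeries.C (R := ℚ)) z).symm

end Expansion

/-! ### The rational function in terms of rational polynomials -/

section Evaluation

/-- Each `b ∈ Ψ` contributes exactly the `φ(b)` elements of `𝓕_B` with reduced denominator `b`. -/
lemma prod_zeroSet_den {M : Type*} [CommMonoid M] (Psi : Finset ℕ) (hpos : ∀ b ∈ Psi, 0 < b)
    (g : ℕ → M) :
    ∏ θ ∈ zeroSet Psi, g θ.den = ∏ b ∈ Psi, g b ^ Nat.totient b := by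
  have hden : ∀ b ∈ Psi, ∀ θ ∈ (((Finset.Icc 1 b).filter fun a => Nat.Coprime a b).image
      fun a : ℕ => (a : ℚ) / b), θ.den = b := by
    intro b hb θ hθ
    obtain ⟨a, ha, rfl⟩ := Finset.mem_image.1 hθ
    have := Rat.den_div_eq_of_coprime (a := (a : ℤ)) (b := (b : ℤ)) (by exact_mod_cast hpos b hb)
      (by simpa using (Finset.mem_filter.1 ha).2)
    rw [Int.cast_natCast, Int.cast_natCast] at this
    exact_mod_cast this
  rw [zeroSet, Finset.prod_biUnion]
  · refine Finset.prod_congr rfl fun b hb => ?_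
    rw [Finset.prod_congr rfl fun θ hθ => by rw [hden b hb θ hθ], Finset.prod_const,
      Finset.card_image_of_injective]
    · congr 1
      rw [Nat.totient]
      have hb' := hpos b hb
      -- `zeroSet` uses the residues `1, …, b` and `totient` uses `0, …, b - 1`.
      refine Finset.card_bij (fun a _ => a % b) ?_ ?_ ?_
      · intro a ha
        rw [Finset.mem_filter] at ha
        have h2 := ha.2
        simp only [Finset.mem_filter, Finset.mem_range]
        refine ⟨Nat.mod_lt _ hb', ?_⟩
        rw [Nat.coprime_comm, Nat.Coprime, ← Nat.gcd_rec]
        exact h2.symm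
      · intro a ha a' ha' h
        simp only [Finset.mem_filter, Finset.mem_Icc] at ha ha'
        rcases ha.1.2.lt_or_eq with h1 | h1 <;> rcases ha'.1.2.lt_or_eq with h2 | h2
        · rwa [Nat.mod_eq_of_lt h1, Nat.mod_eq_of_lt h2] at h
        · rw [Nat.mod_eq_of_lt h1, h2, Nat.mod_self] at h; omega
        · rw [Nat.mod_eq_of_lt h2, h1, Nat.mod_self] at h; omega
        · omega
      · intro c hc
        simp only [Finset.mem_filter, Finset.mem_range] at hc
        rcases Nat.eq_zero_or_pos c with rfl | h0
        · have : b = 1 := by simpa using hc.2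
          subst this
          exact ⟨1, by simp, by simp⟩
        · exact ⟨c, by simp only [Finset.mem_filter, Finset.mem_Icc]; exact ⟨⟨h0, hc.1.le⟩, hc.2.symm⟩,
            Nat.mod_eq_of_lt hc.1⟩
    · intro x y hxy
      have : (b : ℚ) ≠ 0 := by exact_mod_cast (hpos b hb).ne'
      simp only at hxy
      field_simp at hxy
      exact_mod_cast hxy
  · intro b hb b' hb' hne
    rw [Function.onFun, Finset.disjoint_left]
    intro θ hθ hθ'
    exact hne ((hden b hb θ hθ).symm.trans (hden b' hb' θ hθ'))

lemma two_mul_add_one_mul (r : ℚ) (hr : 0 < r) (m : ℕ) :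
    (2 * r + 1) * ((r.den * m : ℕ) : ℚ) = (((2 * r.num.toNat + r.den) * m : ℕ) : ℚ) := by
  have h1 : ((r.num.toNat : ℕ) : ℚ) = r.num := by
    exact_mod_cast congrArg (Int.cast : ℤ → ℚ) (Int.toNat_of_nonneg (Rat.num_pos.2 hr).le)
  have h2 : r * r.den = r.num := Rat.mul_den_eq_num r
  push_cast
  rw [h1, ← h2]
  ring

/-- `A₁ⁿ A₂ⁿ` is the product of one clearing factor for each block of length `m = n / den r`. -/
lemma A1_pow_mul_A2_pow (Psi : Finset ℕ) (hpos : ∀ b ∈ Psi, 0 < b) (r : ℚ) (hr : 0 < r) (m : ℕ)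
    (hm : ∀ b ∈ Psi, ∀ p ∈ b.primeFactors, p - 1 ∣ m) :
    A1 Psi r ^ (r.den * m) * A2 Psi r ^ (r.den * m) =
      ((∏ θ ∈ zeroSet Psi, clearing θ.den m ^ (2 * r.num.toNat + r.den) : ℕ) : ℝ) := by
  set M := 2 * r.num.toNat + r.den with hM
  have hMr : (2 * (r : ℝ) + 1) * ((r.den * m : ℕ) : ℝ) = ((M * m : ℕ) : ℝ) := by
    exact_mod_cast congrArg (Rat.cast : ℚ → ℝ) (two_mul_add_one_mul r hr m)
  rw [prod_zeroSet_den Psi hpos (fun b => clearing b m ^ M), A1, A2, ← Finset.prod_pow,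
    ← Finset.prod_pow, ← Finset.prod_mul_distrib]
  push_cast
  refine Finset.prod_congr rfl fun b hb => ?_
  have e1 : ((b : ℝ) ^ ((2 * (r : ℝ) + 1) * (Nat.totient b : ℝ))) ^ (r.den * m) =
      (((b : ℝ) ^ m) ^ M) ^ Nat.totient b := by
    rw [← Real.rpow_natCast, ← Real.rpow_mul (by positivity), ← pow_mul, ← pow_mul,
      ← Real.rpow_natCast]
    congr 1
    push_cast at hMr ⊢
    linear_combination (Nat.totient b : ℝ) * hMr
  have e2 : (∏ p ∈ b.primeFactors,
      (p : ℝ) ^ ((2 * (r : ℝ) + 1) * (Nat.totient b : ℝ) / ((p : ℝ) - 1))) ^ (r.den * m) =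
      ((∏ p ∈ b.primeFactors, (p : ℝ) ^ (m / (p - 1))) ^ M) ^ Nat.totient b := by
    rw [← Finset.prod_pow, ← Finset.prod_pow, ← Finset.prod_pow]
    refine Finset.prod_congr rfl fun p hp => ?_
    obtain ⟨q, hq⟩ := hm b hb p hp
    have hp2 := (Nat.prime_of_mem_primeFactors hp).two_le
    have hq' : m / (p - 1) = q := by rw [hq, Nat.mul_div_cancel_left _ (by omega)]
    have hmq : (m : ℝ) = ((p : ℝ) - 1) * q := by
      have : ((p - 1 : ℕ) : ℝ) = (p : ℝ) - 1 := by rw [Nat.cast_sub (by omega)]; simp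
      rw [← this]; exact_mod_cast hq
    have hp0 : (p : ℝ) - 1 ≠ 0 := by
      have : (2 : ℝ) ≤ p := by exact_mod_cast hp2
      linarith
    rw [hq', ← Real.rpow_natCast, ← Real.rpow_mul (by positivity), ← pow_mul, ← pow_mul,
      ← Real.rpow_natCast]
    congr 1
    push_cast at hMr ⊢
    rw [div_mul_eq_mul_div, div_eq_iff hp0]
    linear_combination (Nat.totient b : ℝ) * hMr + (Nat.totient b : ℝ) * M * hmq
  rw [e1, e2, clearing]
  push_cast
  rw [mul_pow, mul_pow]

lemma prod_range_mul_blocks {R : Type*} [CommMonoid R] (f : ℕ → R) (M m : ℕ) :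
    ∏ j ∈ range (M * m), f j = ∏ c ∈ range M, ∏ j ∈ range m, f (c * m + j) := by
  induction M with
  | zero => simp
  | succ M ih => rw [add_mul, one_mul, Finset.prod_range_add, ih, Finset.prod_range_succ]

/-- The numerator of `R_n / n!^{s+1}` as a polynomial in `X = t + k`, grouped into blocks of length
`m`, each carrying its own clearing factor. -/
def numPoly (Psi : Finset ℕ) (r : ℚ) (m k : ℕ) : Polynomial ℚ :=
  (Polynomial.X - Polynomial.C (k + r * (r.den * m : ℕ))) *
    ∏ θ ∈ zeroSet Psi, ∏ c ∈ range (2 * r.num.toNat + r.den),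
      (Polynomial.C ((clearing θ.den m : ℚ) / m.factorial) *
        ∏ j ∈ range m, (Polynomial.X +
          Polynomial.C ((θ - k - r * (r.den * m : ℕ) + (c * m : ℕ)) + j)))

lemma Rfun_eq (Psi : Finset ℕ) (hpos : ∀ b ∈ Psi, 0 < b) (r : ℚ) (hr : 0 < r) (m : ℕ)
    (hm : ∀ b ∈ Psi, ∀ p ∈ b.primeFactors, p - 1 ∣ m) (s k : ℕ) (x : ℚ) :
    Rfun Psi r s (r.den * m) ((x - k : ℚ) : ℝ) =
      (((((r.den * m).factorial : ℚ) ^ (s + 1) * (numPoly Psi r m k).eval x /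
        ∏ j ∈ range (r.den * m + 1), (x - k + j) ^ (s + 1) : ℚ)) : ℝ) := by
  set M := 2 * r.num.toNat + r.den with hM
  have hdm : r.den * m / r.den = m := Nat.mul_div_cancel_left _ r.den_pos
  have hlen : 2 * (r.num.toNat * m) + r.den * m = M * m := by rw [hM]; ring
  rw [Rfun, A1_pow_mul_A2_pow Psi hpos r hr m hm, hdm, hlen, ← hM]
  have e1 : (numPoly Psi r m k).eval x =
      (∏ θ ∈ zeroSet Psi, (clearing θ.den m : ℚ) ^ M) / (m.factorial : ℚ) ^ (M * (zeroSet Psi).card) *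
      ((x - k - r * (r.den * m : ℕ)) * ∏ θ ∈ zeroSet Psi, ∏ j ∈ range (M * m),
        (x - k - r * (r.den * m : ℕ) + j + θ)) := by
    have e2 : (m.factorial : ℚ) ^ (M * (zeroSet Psi).card) =
        ∏ θ ∈ zeroSet Psi, (m.factorial : ℚ) ^ M := by
      rw [Finset.prod_const, pow_mul]
    have e3 : ∀ θ ∈ zeroSet Psi, ∏ j ∈ range (M * m), (x - k - r * (r.den * m : ℕ) + j + θ) =
        ∏ c ∈ range M, ∏ j ∈ range m,
          (x + ((θ - k - r * (r.den * m : ℕ) + (c * m : ℕ)) + j)) := by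
      intro θ _
      rw [prod_range_mul_blocks]
      refine Finset.prod_congr rfl fun c _ => Finset.prod_congr rfl fun j _ => ?_
      push_cast
      ring
    rw [e2, ← Finset.prod_div_distrib, Finset.prod_congr rfl e3, numPoly, ← hM]
    simp only [Polynomial.eval_mul, Polynomial.eval_prod, Polynomial.eval_add, Polynomial.eval_sub,
      Polynomial.eval_X, Polynomial.eval_C, Polynomial.eval_pow, Finset.prod_mul_distrib, Finset.prod_const,
      Finset.card_range, div_pow]
    ring
  rw [e1]
  push_cast
  ring

end Evaluation

/-! ### Reading off partial-fraction coefficients -/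

section Extraction

/-- Multiplying the expansion by `∏_j (t + j)^{s+1}` and separating the terms with pole at `X = 0`
(that is, `t = -k`) gives a polynomial identity modulo `X^{s+1}`. -/
lemma exists_polynomial_identity (s n k : ℕ) (hk : k ≤ n) (F : ℚ) (N : Polynomial ℚ)
    (a : ℕ → ℕ → ℚ)
    (h : ∀ x : ℚ, (k : ℚ) < x →
      F * N.eval x / ∏ j ∈ range (n + 1), (x - k + j) ^ (s + 1) =
        ∑ i ∈ Finset.Icc 1 s, ∑ l ∈ range (n + 1), a i l / (x - k + l) ^ i) :
    ∃ Y : Polynomial ℚ, Polynomial.C F * N =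
      (∏ j ∈ (range (n + 1)).erase k, (Polynomial.X + Polynomial.C ((j : ℚ) - k))) ^ (s + 1) *
        ∑ i ∈ Finset.Icc 1 s, Polynomial.C (a i k) * Polynomial.X ^ (s + 1 - i) +
      Polynomial.X ^ (s + 1) * Y := by
  have hkm : k ∈ range (n + 1) := Finset.mem_range.2 (by omega)
  refine ⟨∑ i ∈ Finset.Icc 1 s, ∑ l ∈ (range (n + 1)).erase k,
    Polynomial.C (a i l) * (Polynomial.X + Polynomial.C ((l : ℚ) - k)) ^ (s + 1 - i) *
      ∏ j ∈ ((range (n + 1)).erase l).erase k,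
        (Polynomial.X + Polynomial.C ((j : ℚ) - k)) ^ (s + 1), ?_⟩
  refine Polynomial.eq_of_infinite_eval_eq _ _
    ((Set.Ioi_infinite (k : ℚ)).mono fun x (hx : (k : ℚ) < x) => ?_)
  rw [Set.mem_ofPred_eq]
  have hL : ∀ j : ℕ, x - k + j ≠ 0 := fun j => by
    have : (0 : ℚ) ≤ j := by positivity
    linarith
  have hx0 : x - k + k = x := by ring
  have hP : ∏ j ∈ range (n + 1), (x - k + j) ^ (s + 1) ≠ 0 :=
    Finset.prod_ne_zero_iff.2 fun j _ => pow_ne_zero _ (hL j)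
  have h1 := (div_eq_iff hP).1 (h x hx)
  have hterm : ∀ i ∈ Finset.Icc 1 s, ∀ l ∈ range (n + 1),
      a i l / (x - k + l) ^ i * ∏ j ∈ range (n + 1), (x - k + j) ^ (s + 1) =
        a i l * (x - k + l) ^ (s + 1 - i) *
          ∏ j ∈ (range (n + 1)).erase l, (x - k + j) ^ (s + 1) := by
    intro i hi l hl
    have hi' := (Finset.mem_Icc.1 hi).2
    have hLl := hL l
    rw [← Finset.mul_prod_erase _ _ hl]
    have : (x - k + l) ^ (s + 1) = (x - k + l) ^ (s + 1 - i) * (x - k + l) ^ i := by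
      rw [← pow_add]; congr 1; omega
    rw [this]
    generalize (x - k + l) ^ (s + 1 - i) = U
    field_simp
  have h2 : F * N.eval x = ∑ i ∈ Finset.Icc 1 s,
      (a i k * x ^ (s + 1 - i) * ∏ j ∈ (range (n + 1)).erase k, (x - k + j) ^ (s + 1) +
      ∑ l ∈ (range (n + 1)).erase k, x ^ (s + 1) * (a i l * (x - k + l) ^ (s + 1 - i) *
        ∏ j ∈ ((range (n + 1)).erase l).erase k, (x - k + j) ^ (s + 1))) := by
    rw [h1, Finset.sum_mul]
    refine Finset.sum_congr rfl fun i hi => ?_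
    rw [Finset.sum_mul, Finset.sum_congr rfl (hterm i hi), ← Finset.add_sum_erase _ _ hkm, hx0]
    congr 1
    refine Finset.sum_congr rfl fun l hl => ?_
    rw [← Finset.mul_prod_erase ((range (n + 1)).erase l) _
      (Finset.mem_erase.2 ⟨(Finset.ne_of_mem_erase hl).symm, hkm⟩), hx0]
    ring
  have hlin : ∀ j : ℕ, x + ((j : ℚ) - k) = x - k + j := fun j => by ring
  simp only [Polynomial.eval_mul, Polynomial.eval_add, Polynomial.eval_pow, Polynomial.eval_prod,
    Polynomial.eval_finsetSum, Polynomial.eval_X, Polynomial.eval_C, hlin]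
  rw [h2, Finset.sum_add_distrib, Finset.mul_sum, Finset.mul_sum]
  congr 1
  · refine Finset.sum_congr rfl fun i _ => ?_
    rw [Finset.prod_pow]
    ring
  · refine Finset.sum_congr rfl fun i _ => ?_
    rw [Finset.mul_sum]

/-- The coefficient `a i k` is read off from the power series `N · H^{s+1}`, the expansion at
`t = -k` of `(t + k)^{s+1}` times the rational function. -/
lemma coeff_eq_of_polynomial_identity (s k f : ℕ) (hf : f ≠ 0) (N Q Y : Polynomial ℚ)
    (H : PowerSeries ℚ) (hH : H * (Q : PowerSeries ℚ) = PowerSeries.C (f : ℚ)) (a : ℕ → ℕ → ℚ)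
    (h : Polynomial.C ((f : ℚ) ^ (s + 1)) * N =
      Q ^ (s + 1) * ∑ i ∈ Finset.Icc 1 s, Polynomial.C (a i k) * Polynomial.X ^ (s + 1 - i) +
      Polynomial.X ^ (s + 1) * Y) (i : ℕ) (h1 : 1 ≤ i) (hi : i ≤ s) :
    PowerSeries.coeff (s + 1 - i) ((N : PowerSeries ℚ) * H ^ (s + 1)) = a i k := by
  set S : Polynomial ℚ := ∑ i ∈ Finset.Icc 1 s, Polynomial.C (a i k) * Polynomial.X ^ (s + 1 - i)
    with hS
  have h2 := congrArg (Polynomial.toPowerSeries) h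
  simp only [Polynomial.coe_mul, Polynomial.coe_add, Polynomial.coe_pow, Polynomial.coe_C,
    Polynomial.coe_X] at h2
  have h3 : PowerSeries.C ((f : ℚ) ^ (s + 1)) * ((N : PowerSeries ℚ) * H ^ (s + 1)) =
      PowerSeries.C ((f : ℚ) ^ (s + 1)) * (S : PowerSeries ℚ) +
        PowerSeries.X ^ (s + 1) * ((Y : PowerSeries ℚ) * H ^ (s + 1)) := by
    rw [← mul_assoc, h2, map_pow, ← hH, mul_pow]
    ring
  have h4 := congrArg (PowerSeries.coeff (s + 1 - i)) h3
  rw [map_add, PowerSeries.coeff_C_mul, PowerSeries.coeff_C_mul, PowerSeries.coeff_X_pow_mul',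
    if_neg (by omega), add_zero] at h4
  have hf' : (f : ℚ) ^ (s + 1) ≠ 0 := pow_ne_zero _ (by exact_mod_cast hf)
  rw [mul_left_cancel₀ hf' h4, Polynomial.coeff_coe, hS, Polynomial.finsetSum_coeff,
    Finset.sum_eq_single i]
  · simp
  · intro b hb hbi
    have := Finset.mem_Icc.1 hb
    rw [Polynomial.coeff_C_mul, Polynomial.coeff_X_pow, if_neg (by omega), mul_zero]
  · intro hb
    exact absurd (Finset.mem_Icc.2 ⟨h1, hi⟩) hb

end Extraction

/-! ### Integrality of the rescaled numerator -/

section Numerator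

lemma exists_int_div_den (θ : ℚ) (z : ℤ) : ∃ A : ℤ, θ + z = A / (θ.den : ℚ) := by
  refine ⟨θ.num + z * θ.den, ?_⟩
  have h0 : (θ.den : ℚ) ≠ 0 := by exact_mod_cast θ.den_nz
  rw [eq_div_iff h0, add_mul, Rat.mul_den_eq_num]
  push_cast
  rfl

lemma numPoly_mem_scaledIntPoly (Psi : Finset ℕ) (r : ℚ) (m k n : ℕ) (hmn : m ≤ n) :
    numPoly Psi r m k ∈ scaledIntPoly (dlcm n) := by
  have hint : ((r.num * m : ℤ) : ℚ) = r * (r.den * m : ℕ) := by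
    have := Rat.mul_den_eq_num r
    push_cast
    rw [← this]
    ring
  rw [numPoly, ← hint]
  refine mul_mem (sub_mem (X_mem_scaledIntPoly _)
    (C_mem_scaledIntPoly _ _ ⟨k + r.num * m, by push_cast; rfl⟩)) ?_
  refine prod_mem fun θ _ => prod_mem fun c _ => block_mem_scaledIntPoly _ _ _ θ.den_pos
    (fun l h1 h2 => dvd_dlcm h1 (h2.trans hmn)) _ ?_
  obtain ⟨A, hA⟩ := exists_int_div_den θ (-k - r.num * m + c * m)
  refine ⟨A, ?_⟩
  rw [← hA]
  push_cast
  ring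

end Numerator


/-- For the coefficients `a_{i,k}` of the partial-fraction expansion
`R_n(t) = ∑_{i=1}^{s}∑_{k=0}^{n} a_{i,k}/(t+k)ⁱ`, the number `d_n^{s+1−i}·a_{i,k}` is an
integer for all `1 ≤ i ≤ s` and `0 ≤ k ≤ n`. -/
theorem dlcm_pow_mul_partialFractionCoeff_isInt
    (B : ℝ) (hB : 0 < B) (r : ℚ) (hr : 0 < r)
    (Psi : Finset ℕ) (hPsi : ∀ b : ℕ, b ∈ Psi ↔ 0 < b ∧ (Nat.totient b : ℝ) ≤ B)
    (s : ℕ) (hs : Odd s) (hsB : 10 * (2 * (r : ℝ) + 1) * B ^ 2 ≤ (s : ℝ))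
    (hFB : ((zeroSet Psi).card : ℝ) ≤ B ^ 2)
    (n : ℕ) (hn : 0 < n) (hPn : Pconst Psi r ∣ n)
    (a : ℕ → ℕ → ℚ)
    (ha : ∀ t : ℝ, (∀ k ∈ Finset.range (n + 1), t + (k : ℝ) ≠ 0) →
      Rfun Psi r s n t = ∑ i ∈ Finset.Icc 1 s, ∑ k ∈ Finset.range (n + 1),
        (a i k : ℝ) / (t + (k : ℝ)) ^ i) :
    ∀ i : ℕ, 1 ≤ i → i ≤ s → ∀ k : ℕ, k ≤ n →
      ∃ z : ℤ, ((dlcm n : ℚ)) ^ (s + 1 - i) * a i k = z := by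
  intro i h1 hi k hk
  have hpos : ∀ b ∈ Psi, 0 < b := fun b hb => ((hPsi b).1 hb).1
  obtain ⟨e, he⟩ := hPn
  -- `m = n / den r` is divisible by every `p - 1`.
  obtain ⟨m, rfl, hm⟩ : ∃ m, n = r.den * m ∧ ∀ b ∈ Psi, ∀ p ∈ b.primeFactors, p - 1 ∣ m := by
    refine ⟨2 * (Psi.biUnion Nat.primeFactors).lcm (fun p => p - 1) * e, ?_, ?_⟩
    · rw [he, Pconst]; ring
    · intro b hb p hp
      exact Dvd.dvd.mul_right (Dvd.dvd.mul_left
        (Finset.dvd_lcm (f := fun p => p - 1) (Finset.mem_biUnion.2 ⟨b, hb, hp⟩)) _) _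
  set n := r.den * m with hn_def
  have hmn : m ≤ n := Nat.le_mul_of_pos_left m r.den_pos
  obtain ⟨H, hHmem, hH⟩ := exists_inverse_mem_scaledInt n k hk
  obtain ⟨Y, hY⟩ := exists_polynomial_identity s n k hk ((n.factorial : ℚ) ^ (s + 1))
    (numPoly Psi r m k) a (fun x hx => by
      have h2 := ha ((x - k : ℚ) : ℝ) (fun l _ => by
        have h3 : (0 : ℚ) < x - k := sub_pos.2 hx
        have h4 : (0 : ℝ) < ((x - k : ℚ) : ℝ) := by exact_mod_cast h3
        positivity)
      rw [hn_def, Rfun_eq Psi hpos r hr m hm s k x] at h2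
      exact_mod_cast h2)
  have hcoeff := coeff_eq_of_polynomial_identity s k n.factorial n.factorial_ne_zero
    (numPoly Psi r m k) _ Y H hH a hY i h1 hi
  have hmem : ((numPoly Psi r m k : Polynomial ℚ) : PowerSeries ℚ) * H ^ (s + 1) ∈
      scaledInt (dlcm n) :=
    mul_mem (numPoly_mem_scaledIntPoly Psi r m k n hmn) (pow_mem hHmem _)
  obtain ⟨z, hz⟩ := mem_scaledInt.1 hmem (s + 1 - i)
  exact ⟨z, by rw [← hz, hcoeff]⟩

end
end

section
/- There exists an absolute constant B₀ such that the following holds whenever B ≥ B₀, r is a positive rational, and s is an odd positive integer with s ≥ 10(2r+1)B²: the limit over positive integers n divisible by P_{B,den(r)} satisfies lim_{n→∞} (r_{n,1})^{1/n} = g(x₀), where r_{n,1} = ∑_{m=1}^{∞} R_n(m+1). -/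
/-!
Write `n = den(r) * N`, `F = |𝓕_B|`, `S = s + 1`, `ρ = r`, and let `L y = log y!`. The term of the
series at an integer `t ≤ rn` vanishes (because of the factor `t - rn` and of the zero `θ = 1`),
and at `t = rn + k` with `k ≥ 1` it is positive, with logarithm
`n * phase (k / n) + O(1 + log (n + k))`, uniformly in `k`. This is Stirling's formula with a
logarithmic error: each product over `j` is a quotient of factorials, up to a factor that is
polynomial in `n + k`.

The derivative of `phase` is `phaseDeriv = log f`. The sign of the derivative of `log f` is that of
`(S - F(2ρ+1)) (x² + (2ρ+1)x) - F(2ρ+1)ρ(ρ+1)`, and `log f → 0` at infinity. Hence a zero `x₀` of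
`log f` forces `F(2ρ+1) < S` (otherwise `log f` decreases strictly to `0`), and then `log f ≥ 0`
before `x₀` and `log f ≤ 0` after it (`phaseDeriv_sign`). So `phase` is maximal at `x₀`, where
`log f (x₀) = 0` makes its value `log g(x₀)` (`gg_eq_exp`). No upper bound for `|𝓕_B|` in terms of
`B` is needed: the existence of `x₀` supplies the inequality that makes the series converge.

Lower bound: keep only the term `k = ⌈x₀ n⌉`. Upper bound: the terms times `(m + 1)²` are at most
`exp (n * phase x₀ + O(1 + log n))`. The error `O(log (1 + k / n))` is unbounded in `k`; it is
absorbed by `phase x ≤ C' - c log (1 + x)` with `c = S - F(2ρ+1) > 0` (`phase_le_log`), which gives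
`n * phase x + D log (1 + x) ≤ (n - D/c) * phase x + D C'/c ≤ (n - D/c) * phase x₀ + D C'/c`
once `n ≥ D/c`.
-/

open Finset Filter Real

noncomputable section
/-- `f(X) = ((X+2r+1)/X)^{|𝓕_B|}·((X+r)/(X+r+1))^{s+1}`. -/
def ff (Psi : Finset ℕ) (r : ℚ) (s : ℕ) (X : ℝ) : ℝ :=
  ((X + 2 * (r : ℝ) + 1) / X) ^ ((zeroSet Psi).card) *
    ((X + (r : ℝ)) / (X + (r : ℝ) + 1)) ^ (s + 1)

/-- `g(X) = A₁(B)A₂(B)·den(r)^{(2r+1)|𝓕_B|}·(X+2r+1)^{(2r+1)|𝓕_B|}·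
((X+r)^r/(X+r+1)^{r+1})^{s+1}`. -/
def gg (Psi : Finset ℕ) (r : ℚ) (s : ℕ) (X : ℝ) : ℝ :=
  A1 Psi r * A2 Psi r *
    (r.den : ℝ) ^ ((2 * (r : ℝ) + 1) * ((zeroSet Psi).card : ℝ)) *
    (X + 2 * (r : ℝ) + 1) ^ ((2 * (r : ℝ) + 1) * ((zeroSet Psi).card : ℝ)) *
    ((X + (r : ℝ)) ^ (r : ℝ) / (X + (r : ℝ) + 1) ^ ((r : ℝ) + 1)) ^ (s + 1)


/-! ### The exponential rate and its maximum -/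

/-- The logarithm of `f`, with `F = |𝓕_B|`, `S = s + 1` and `ρ = r`; see `log_ff`. -/
def phaseDeriv (F S ρ x : ℝ) : ℝ :=
  F * (log (x + 2 * ρ + 1) - log x) + S * (log (x + ρ) - log (x + ρ + 1))

/-- The exponential rate of the terms: the term at `t = rn + k` has logarithm about
`n * phase α F S ρ (k / n)`, where `α` collects the factors that do not depend on `k`. -/
def phase (α F S ρ x : ℝ) : ℝ :=
  α + F * ((x + 2 * ρ + 1) * log (x + 2 * ρ + 1) - x * log x)
    + S * ((x + ρ) * log (x + ρ) - (x + ρ + 1) * log (x + ρ + 1))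

lemma hasDerivAt_mul_log_add {a x : ℝ} (h : x + a ≠ 0) :
    HasDerivAt (fun y => (y + a) * log (y + a)) (log (x + a) + 1) x := by
  exact ((hasDerivAt_mul_log h).comp x ((hasDerivAt_id' x).add_const a)).congr_deriv (mul_one _)

lemma hasDerivAt_log_add {a x : ℝ} (h : x + a ≠ 0) :
    HasDerivAt (fun y => log (y + a)) (1 / (x + a)) x := by
  simpa using ((hasDerivAt_id x).add_const a).log h

lemma hasDerivAt_phase (α F S : ℝ) {ρ x : ℝ} (hρ : 0 < ρ) (hx : 0 < x) :
    HasDerivAt (phase α F S ρ) (phaseDeriv F S ρ x) x := by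
  have h1 := hasDerivAt_mul_log_add (a := 2 * ρ + 1) (x := x) (by positivity)
  have h2 := hasDerivAt_mul_log hx.ne'
  have h3 := hasDerivAt_mul_log_add (a := ρ) (x := x) (by positivity)
  have h4 := hasDerivAt_mul_log_add (a := ρ + 1) (x := x) (by positivity)
  refine HasDerivAt.congr_of_eventuallyEq
    (((((h1.sub h2).const_mul F).const_add α).add ((h3.sub h4).const_mul S)).congr_deriv ?_)
    (Eventually.of_forall fun y => ?_)
  · simp [phaseDeriv, add_assoc]
  · simp [phase, add_assoc]

lemma hasDerivAt_phaseDeriv (F S : ℝ) {ρ x : ℝ} (hρ : 0 < ρ) (hx : 0 < x) :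
    HasDerivAt (phaseDeriv F S ρ)
      (((S - F * (2 * ρ + 1)) * (x ^ 2 + (2 * ρ + 1) * x) - F * (2 * ρ + 1) * (ρ * (ρ + 1)))
        / (x * (x + 2 * ρ + 1) * ((x + ρ) * (x + ρ + 1)))) x := by
  have h1 := hasDerivAt_log_add (a := 2 * ρ + 1) (x := x) (by positivity)
  have h2 := hasDerivAt_log hx.ne'
  have h3 := hasDerivAt_log_add (a := ρ) (x := x) (by positivity)
  have h4 := hasDerivAt_log_add (a := ρ + 1) (x := x) (by positivity)
  refine HasDerivAt.congr_of_eventuallyEq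
    ((((h1.sub h2).const_mul F).add ((h3.sub h4).const_mul S)).congr_deriv ?_)
    (Eventually.of_forall fun y => ?_)
  · field_simp
    ring
  · simp [phaseDeriv, add_assoc]

lemma tendsto_log_add_sub_log_zero (a b : ℝ) :
    Tendsto (fun x : ℝ => log (x + a) - log (x + b)) atTop (nhds 0) := by
  have h := (Real.tendsto_log_comp_add_sub_log a).sub (Real.tendsto_log_comp_add_sub_log b)
  simpa using h

lemma tendsto_phaseDeriv (F S ρ : ℝ) : Tendsto (phaseDeriv F S ρ) atTop (nhds 0) := by
  have h1 := (tendsto_log_add_sub_log_zero (2 * ρ + 1) 0).const_mul F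
  have h2 := (tendsto_log_add_sub_log_zero ρ (ρ + 1)).const_mul S
  have h := h1.add h2
  simp only [mul_zero, add_zero] at h
  refine h.congr fun x => ?_
  simp [phaseDeriv, add_assoc]

lemma phaseDeriv_strictAntiOn {F S ρ a b : ℝ} (hρ : 0 < ρ) (ha : 0 < a)
    (hD : ∀ y, a < y → y < b → (S - F * (2 * ρ + 1)) * (y ^ 2 + (2 * ρ + 1) * y)
      - F * (2 * ρ + 1) * (ρ * (ρ + 1)) < 0) :
    StrictAntiOn (phaseDeriv F S ρ) (Set.Icc a b) := by
  refine strictAntiOn_of_deriv_neg (convex_Icc a b) ?_ ?_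
  · intro y hy
    exact (hasDerivAt_phaseDeriv F S hρ (ha.trans_le hy.1)).continuousAt.continuousWithinAt
  · intro y hy
    rw [interior_Icc] at hy
    have hy0 : 0 < y := ha.trans hy.1
    rw [(hasDerivAt_phaseDeriv F S hρ hy0).deriv]
    exact div_neg_of_neg_of_pos (hD y hy.1 hy.2) (by positivity)

lemma phaseDeriv_strictMonoOn {F S ρ a : ℝ} (hρ : 0 < ρ) (ha : 0 < a)
    (hD : ∀ y, a < y → 0 < (S - F * (2 * ρ + 1)) * (y ^ 2 + (2 * ρ + 1) * y)
      - F * (2 * ρ + 1) * (ρ * (ρ + 1))) :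
    StrictMonoOn (phaseDeriv F S ρ) (Set.Ici a) := by
  refine strictMonoOn_of_deriv_pos (convex_Ici a) ?_ ?_
  · intro y hy
    exact (hasDerivAt_phaseDeriv F S hρ (ha.trans_le hy)).continuousAt.continuousWithinAt
  · intro y hy
    rw [interior_Ici] at hy
    have hy0 : 0 < y := ha.trans hy
    rw [(hasDerivAt_phaseDeriv F S hρ hy0).deriv]
    exact div_pos (hD y hy) (by positivity)

/-- If `log f` increases strictly on `[a, ∞)`, then it is negative at `a`, because it tends to `0`
at infinity. -/
lemma phaseDeriv_neg_of_increasing {F S ρ a : ℝ} (hρ : 0 < ρ) (ha : 0 < a)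
    (hD : ∀ y, a < y → 0 < (S - F * (2 * ρ + 1)) * (y ^ 2 + (2 * ρ + 1) * y)
      - F * (2 * ρ + 1) * (ρ * (ρ + 1))) :
    phaseDeriv F S ρ a < 0 := by
  have hm := phaseDeriv_strictMonoOn hρ ha hD
  have h1 : phaseDeriv F S ρ a < phaseDeriv F S ρ (a + 1) :=
    hm (by simp) (by simp) (by linarith)
  refine h1.trans_le (ge_of_tendsto (tendsto_phaseDeriv F S ρ) ?_)
  filter_upwards [eventually_ge_atTop (a + 1)] with y hy
  exact hm.monotoneOn (by simp) (by simp; linarith) hy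

/-- A positive zero of `log f` forces `F (2ρ + 1) < S`, and `log f` changes sign there from
nonnegative to nonpositive. -/
lemma phaseDeriv_sign {F S ρ x₀ : ℝ} (hF : 0 < F) (hρ : 0 < ρ) (hx₀ : 0 < x₀)
    (h0 : phaseDeriv F S ρ x₀ = 0) :
    F * (2 * ρ + 1) < S ∧ (∀ x, 0 < x → x ≤ x₀ → 0 ≤ phaseDeriv F S ρ x) ∧
      ∀ x, x₀ ≤ x → phaseDeriv F S ρ x ≤ 0 := by
  have he : 0 < F * (2 * ρ + 1) * (ρ * (ρ + 1)) := by positivity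
  have hc : F * (2 * ρ + 1) < S := by
    by_contra! hc
    have ha : ∀ b, StrictAntiOn (phaseDeriv F S ρ) (Set.Icc x₀ b) := fun b =>
      phaseDeriv_strictAntiOn hρ hx₀ fun y hy _ => by
        have : 0 < y := hx₀.trans hy
        have : 0 ≤ (F * (2 * ρ + 1) - S) * (y ^ 2 + (2 * ρ + 1) * y) :=
          mul_nonneg (by linarith) (by positivity)
        linarith
    have h1 : phaseDeriv F S ρ (x₀ + 1) < phaseDeriv F S ρ x₀ :=
      ha (x₀ + 1) (by simp) (by simp) (by linarith)
    have h2 : 0 ≤ phaseDeriv F S ρ (x₀ + 1) := by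
      refine le_of_tendsto (tendsto_phaseDeriv F S ρ) ?_
      filter_upwards [eventually_ge_atTop (x₀ + 1)] with y hy
      exact (ha y).antitoneOn (by simp; linarith) (by simp; linarith) hy
    linarith
  -- the numerator of the derivative of `phaseDeriv` is increasing on the positive axis
  have hmono : ∀ x y, 0 < x → x < y →
      (S - F * (2 * ρ + 1)) * (x ^ 2 + (2 * ρ + 1) * x) <
      (S - F * (2 * ρ + 1)) * (y ^ 2 + (2 * ρ + 1) * y) := fun x y hx hxy =>
    mul_lt_mul_of_pos_left (by gcongr) (by linarith)
  have hD0 : (S - F * (2 * ρ + 1)) * (x₀ ^ 2 + (2 * ρ + 1) * x₀)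
      - F * (2 * ρ + 1) * (ρ * (ρ + 1)) < 0 := by
    by_contra! h
    have := phaseDeriv_neg_of_increasing (F := F) (S := S) hρ hx₀ fun y hy => by
      linarith [hmono x₀ y hx₀ hy]
    linarith
  refine ⟨hc, fun x hx hxx => ?_, fun x hxx => ?_⟩
  · rw [← h0]
    refine (phaseDeriv_strictAntiOn (b := x₀) hρ hx fun y hy hy' => ?_).antitoneOn
      (by simpa) (by simpa) hxx
    linarith [hmono y x₀ (hx.trans hy) hy']
  · by_cases hD : 0 ≤ (S - F * (2 * ρ + 1)) * (x ^ 2 + (2 * ρ + 1) * x)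
      - F * (2 * ρ + 1) * (ρ * (ρ + 1))
    · refine (phaseDeriv_neg_of_increasing hρ (hx₀.trans_le hxx) fun y hy => ?_).le
      linarith [hmono x y (hx₀.trans_le hxx) hy]
    · push Not at hD
      rw [← h0]
      refine (phaseDeriv_strictAntiOn (b := x) hρ hx₀ fun y hy hy' => ?_).antitoneOn
        (by simpa) (by simpa) hxx
      linarith [hmono y x (hx₀.trans hy) hy']

lemma phase_le {F S ρ x₀ : ℝ} (α : ℝ) (hF : 0 < F) (hρ : 0 < ρ) (hx₀ : 0 < x₀)
    (h0 : phaseDeriv F S ρ x₀ = 0) {x : ℝ} (hx : 0 < x) :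
    phase α F S ρ x ≤ phase α F S ρ x₀ := by
  obtain ⟨-, hl, hr⟩ := phaseDeriv_sign hF hρ hx₀ h0
  rcases le_total x x₀ with h | h
  · refine monotoneOn_of_deriv_nonneg (convex_Icc x x₀)
      (fun y hy => (hasDerivAt_phase α F S hρ (hx.trans_le hy.1)).continuousAt.continuousWithinAt)
      (fun y hy => ?_) (fun y hy => ?_) (by simpa) (by simpa) h
    all_goals rw [interior_Icc] at hy
    · exact (hasDerivAt_phase α F S hρ
        (hx.trans hy.1)).differentiableAt.differentiableWithinAt
    · rw [(hasDerivAt_phase α F S hρ (hx.trans hy.1)).deriv]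
      exact hl y (hx.trans hy.1) hy.2.le
  · refine antitoneOn_of_deriv_nonpos (convex_Icc x₀ x)
      (fun y hy => (hasDerivAt_phase α F S hρ (hx₀.trans_le hy.1)).continuousAt.continuousWithinAt)
      (fun y hy => ?_) (fun y hy => ?_) (by simpa) (by simpa) h
    all_goals rw [interior_Icc] at hy
    · exact (hasDerivAt_phase α F S hρ
        (hx₀.trans hy.1)).differentiableAt.differentiableWithinAt
    · rw [(hasDerivAt_phase α F S hρ (hx₀.trans hy.1)).deriv]
      exact hr y hy.1.le

/-- The tangent-line bound for the convex function `y log y`. -/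
lemma mul_log_sub_le {a b : ℝ} (ha : 0 < a) (hb : 0 < b) :
    (b - a) * (log a + 1) ≤ b * log b - a * log a := by
  have h := Real.log_le_sub_one_of_pos (div_pos ha hb)
  rw [log_div ha.ne' hb.ne'] at h
  have h2 := mul_le_mul_of_nonneg_left h hb.le
  have : b * (a / b - 1) = a - b := by field_simp
  rw [this] at h2
  linarith

/-- Logarithmic decay of the rate; of use when `F (2ρ + 1) < S`. -/
lemma phase_le_log (α : ℝ) {F S ρ : ℝ} (hF : 0 < F) (hS : 0 < S) (hρ : 0 < ρ) :
    ∃ C', ∀ x, 0 < x →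
      phase α F S ρ x ≤ C' - (S - F * (2 * ρ + 1)) * log (1 + x) := by
  refine ⟨α + F * (2 * ρ + 1) * (log (2 * ρ + 1) + 1) - S * (log (min ρ 1) + 1),
    fun x hx => ?_⟩
  have h1 := mul_log_sub_le (a := x + 2 * ρ + 1) (b := x) (by positivity) hx
  have h2 := mul_log_sub_le (a := x + ρ) (b := x + ρ + 1) (by positivity) (by positivity)
  have h3 : log (x + 2 * ρ + 1) ≤ log (2 * ρ + 1) + log (1 + x) := by
    rw [← log_mul (by positivity) (by positivity)]
    apply log_le_log (by positivity)
    nlinarith [mul_pos hρ hx]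
  have hm : 0 < min ρ 1 := lt_min hρ one_pos
  have h4 : log (min ρ 1) + log (1 + x) ≤ log (x + ρ) := by
    rw [← log_mul (by positivity) (by positivity)]
    apply log_le_log (by positivity)
    nlinarith [min_le_left ρ 1, min_le_right ρ 1]
  have h5 : (x + 2 * ρ + 1) * log (x + 2 * ρ + 1) - x * log x ≤
      (2 * ρ + 1) * (log (2 * ρ + 1) + log (1 + x) + 1) := by
    have : (2 * ρ + 1) * (log (x + 2 * ρ + 1) + 1) ≤
      (2 * ρ + 1) * (log (2 * ρ + 1) + log (1 + x) + 1) := by gcongr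
    linarith
  have h6 : (x + ρ) * log (x + ρ) - (x + ρ + 1) * log (x + ρ + 1) ≤
      - (log (min ρ 1) + log (1 + x) + 1) := by linarith
  have h7 := mul_le_mul_of_nonneg_left h5 hF.le
  have h8 := mul_le_mul_of_nonneg_left h6 hS.le
  unfold phase
  linarith

/-! ### Logarithm of a term -/

/-- A crude form of Stirling's formula. -/
lemma abs_log_factorial_sub_le (n : ℕ) :
    |log (n.factorial) - ((n : ℝ) * log n - n)| ≤ 1 + log (n + 1) := by
  have key : ∀ n : ℕ, 1 ≤ n → (n : ℝ) * log n - n ≤ log n.factorial ∧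
      log n.factorial ≤ (n : ℝ) * log n - n + 1 + log n := by
    intro n hn
    induction n, hn using Nat.le_induction with
    | base => simp
    | succ n hn ih =>
      have hn0 : (0 : ℝ) < n := by exact_mod_cast hn
      rw [Nat.factorial_succ]
      push_cast
      rw [log_mul (by positivity) (by positivity)]
      have h1 := mul_log_sub_le (a := (n : ℝ) + 1) (b := n) (by positivity) hn0
      have h2 := mul_log_sub_le (a := (n : ℝ)) (b := n + 1) (by positivity) (by positivity)
      -- `1 ≤ (n + 1) (log (n + 1) - log n)`
      have h3 := Real.log_le_sub_one_of_pos (x := (n : ℝ) / (n + 1)) (by positivity)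
      rw [log_div (by positivity) (by positivity)] at h3
      have h4 := mul_le_mul_of_nonneg_left h3 (by positivity : (0 : ℝ) ≤ n + 1)
      have : ((n : ℝ) + 1) * (n / (n + 1) - 1) = -1 := by field_simp; ring
      rw [this] at h4
      constructor <;> linarith [ih.1, ih.2]
  rcases Nat.eq_zero_or_pos n with rfl | hn
  · simp
  · obtain ⟨h1, h2⟩ := key n hn
    have hn0 : (0 : ℝ) < n := by exact_mod_cast hn
    have h3 : log n ≤ log (n + 1) := log_le_log hn0 (by linarith)
    have h4 : 0 ≤ log ((n : ℝ) + 1) := log_nonneg (by linarith)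
    rw [abs_le]
    constructor <;> linarith

lemma sum_log_eq (k M : ℕ) :
    ∑ j ∈ range M, log ((k : ℝ) + j + 1) = log (k + M).factorial - log k.factorial := by
  induction M with
  | zero => simp
  | succ M ih =>
    rw [sum_range_succ, ih, ← add_assoc, Nat.factorial_succ]
    push_cast
    rw [log_mul (by positivity) (by positivity)]
    ring

/-- `n * phase (k / n)` is what remains of the logarithm of a term after each `log y!` has been
replaced by `y log y - y`: the linear terms and the `log n` terms cancel. -/
lemma phase_scaling (lA : ℝ) (F S : ℝ) {ρ d n k : ℝ} (hρ : 0 < ρ) (hd : 0 < d) (hn : 0 < n)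
    (hk : 0 < k) :
    n * phase (lA + (2 * ρ + 1) * F * log d) F S ρ (k / n) =
      n * lA + S * (n * log n - n) - (2 * ρ + 1) * d * F * (n / d * log (n / d) - n / d)
      + F * (((k + (2 * ρ + 1) * n) * log (k + (2 * ρ + 1) * n) - (k + (2 * ρ + 1) * n))
        - (k * log k - k))
      + S * (((ρ * n + k) * log (ρ * n + k) - (ρ * n + k))
        - ((ρ * n + k + n) * log (ρ * n + k + n) - (ρ * n + k + n))) := by
  obtain ⟨x, hx, rfl⟩ : ∃ x, 0 < x ∧ k = x * n := ⟨k / n, by positivity, by field_simp⟩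
  have e1 : x * n + (2 * ρ + 1) * n = (x + 2 * ρ + 1) * n := by ring
  have e2 : ρ * n + x * n = (x + ρ) * n := by ring
  have e3 : (x + ρ) * n + n = (x + ρ + 1) * n := by ring
  rw [e1, e2, e3, mul_div_cancel_right₀ _ hn.ne', log_div hn.ne' hd.ne',
    log_mul (by positivity) hn.ne', log_mul (by positivity) hn.ne', log_mul (by positivity) hn.ne',
    log_mul (by positivity) hn.ne']
  unfold phase
  field_simp
  ring

lemma zeroSet_pos_le_one {Psi : Finset ℕ} {θ : ℚ} (h : θ ∈ zeroSet Psi) :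
    0 < (θ : ℝ) ∧ (θ : ℝ) ≤ 1 := by
  simp only [zeroSet, mem_biUnion, mem_image, mem_filter, mem_Icc] at h
  obtain ⟨b, -, a, ⟨⟨h1, h2⟩, -⟩, rfl⟩ := h
  have ha : (0 : ℝ) < a := by exact_mod_cast h1
  have hab : (a : ℝ) ≤ b := by exact_mod_cast h2
  push_cast
  exact ⟨div_pos ha (ha.trans_le hab), div_le_one_of_le₀ hab (ha.trans_le hab).le⟩

lemma one_mem_zeroSet {Psi : Finset ℕ} (h : 1 ∈ Psi) : (1 : ℚ) ∈ zeroSet Psi := by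
  simp only [zeroSet, mem_biUnion, mem_image, mem_filter, mem_Icc]
  exact ⟨1, h, 1, by simp, by simp⟩

lemma A1_pos {Psi : Finset ℕ} (r : ℚ) (h : ∀ b ∈ Psi, 0 < b) : 0 < A1 Psi r :=
  prod_pos fun b hb => rpow_pos_of_pos (by exact_mod_cast h b hb) _

lemma A2_pos (Psi : Finset ℕ) (r : ℚ) : 0 < A2 Psi r :=
  prod_pos fun b _ => prod_pos fun p hp =>
    rpow_pos_of_pos (by exact_mod_cast (Nat.prime_of_mem_primeFactors hp).pos) _

lemma rat_cast_eq {r : ℚ} (hr : 0 < r) : (r : ℝ) = (r.num.toNat : ℝ) / r.den := by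
  have h : ((r.num.toNat : ℕ) : ℤ) = r.num := Int.toNat_of_nonneg (Rat.num_pos.2 hr).le
  have h2 : ((r.num.toNat : ℕ) : ℝ) = ((r.num : ℤ) : ℝ) := by exact_mod_cast congrArg (Int.cast : ℤ → ℝ) h
  rw [h2, Rat.cast_def]

lemma rat_mul_den {r : ℚ} (hr : 0 < r) (N : ℕ) :
    (r : ℝ) * ((r.den * N : ℕ) : ℝ) = r.num.toNat * N := by
  have : (r.den : ℝ) ≠ 0 := by exact_mod_cast r.den_nz
  rw [rat_cast_eq hr]
  push_cast
  field_simp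

/-- The terms at the integers `t = m + 2 ≤ rn` vanish. -/
lemma Rfun_eq_zero {Psi : Finset ℕ} {r : ℚ} (hr : 0 < r) (h1 : 1 ∈ Psi) (s N m : ℕ)
    (hm : m + 2 ≤ r.num.toNat * N) :
    Rfun Psi r s (r.den * N) ((m : ℝ) + 1 + 1) = 0 := by
  unfold Rfun
  rw [rat_mul_den hr, Nat.mul_div_cancel_left _ r.den_pos]
  rcases hm.eq_or_lt with h | h
  · have : (m : ℝ) + 1 + 1 - r.num.toNat * N = 0 := by
      rw [sub_eq_zero]
      have : ((m + 2 : ℕ) : ℝ) = ((r.num.toNat * N : ℕ) : ℝ) := by rw [h]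
      push_cast at this
      linarith
    rw [this]
    simp
  · obtain ⟨j, hj⟩ := Nat.exists_eq_add_of_lt h
    have hz : ∏ θ ∈ zeroSet Psi,
        ∏ j ∈ range (2 * (r.num.toNat * N) + r.den * N),
          ((m : ℝ) + 1 + 1 - r.num.toNat * N + (j : ℝ) + (θ : ℝ)) = 0 := by
      refine prod_eq_zero (one_mem_zeroSet h1) (prod_eq_zero (i := j) (mem_range.2 (by omega)) ?_)
      have : ((r.num.toNat * N : ℕ) : ℝ) = ((m + 2 + j + 1 : ℕ) : ℝ) := by rw [hj]
      push_cast at this ⊢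
      linarith
    rw [hz]
    simp

lemma log_factorial_succ (n : ℕ) :
    log (n + 1).factorial = log ((n : ℝ) + 1) + log n.factorial := by
  rw [Nat.factorial_succ]
  push_cast
  rw [log_mul (by positivity) (by positivity)]

/-- For `0 < θ ≤ 1`, the product of the `k + j + θ` over `j < M`, where `k = K + 1`, differs from
`(k + M)! / k!` by at most a factor `k + M`. -/
lemma sum_log_shift_bounds (K M : ℕ) {θ : ℝ} (h0 : 0 < θ) (h1 : θ ≤ 1) :
    log (K + 1 + M).factorial - log (K + 1).factorial - log ((K : ℝ) + 1 + M)
      ≤ ∑ j ∈ range M, log ((K : ℝ) + 1 + j + θ) ∧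
    ∑ j ∈ range M, log ((K : ℝ) + 1 + j + θ)
      ≤ log (K + 1 + M).factorial - log (K + 1).factorial := by
  constructor
  · have h := sum_log_eq K M
    have e : log (K + 1 + M).factorial = log ((K : ℝ) + 1 + M) + log (K + M).factorial := by
      rw [show K + 1 + M = K + M + 1 by ring, log_factorial_succ]
      push_cast
      ring_nf
    have h2 : ∑ j ∈ range M, log ((K : ℝ) + j + 1) ≤ ∑ j ∈ range M, log ((K : ℝ) + 1 + j + θ) :=
      sum_le_sum fun j _ => log_le_log (by positivity) (by linarith)
    have h3 : 0 ≤ log ((K : ℝ) + 1) := log_nonneg (by linarith [(Nat.cast_nonneg K : (0:ℝ) ≤ K)])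
    rw [e, log_factorial_succ]
    linarith
  · have h := sum_log_eq (K + 1) M
    rw [← h]
    push_cast
    exact sum_le_sum fun j _ => log_le_log (by positivity) (by linarith)

/-- The term at `t = rn + (K + 1)`, where `n = den(r) * N` and so `rn = num(r) * N`. -/
lemma Rfun_pos_and_log {Psi : Finset ℕ} {r : ℚ} (hr : 0 < r) (hPsi : ∀ b ∈ Psi, 0 < b)
    (s N K : ℕ) :
    0 < Rfun Psi r s (r.den * N) (r.num.toNat * N + (K + 1)) ∧
    log (Rfun Psi r s (r.den * N) (r.num.toNat * N + (K + 1))) =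
      ((r.den * N : ℕ) : ℝ) * (log (A1 Psi r) + log (A2 Psi r))
      + ((s : ℝ) + 1) * log (r.den * N).factorial
      - (2 * r.num.toNat + r.den) * (zeroSet Psi).card * log N.factorial
      + log ((K : ℝ) + 1)
      + ∑ θ ∈ zeroSet Psi, ∑ j ∈ range (2 * (r.num.toNat * N) + r.den * N),
          log ((K : ℝ) + 1 + j + θ)
      - ((s : ℝ) + 1) * (log (r.num.toNat * N + K + (r.den * N + 1)).factorial
          - log (r.num.toNat * N + K).factorial) := by
  have hA1 := A1_pos r hPsi
  have hA2 := A2_pos Psi r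
  have hP : ∀ θ ∈ zeroSet Psi, ∀ j ∈ range (2 * (r.num.toNat * N) + r.den * N),
      0 < (K : ℝ) + 1 + j + θ := fun θ hθ j _ => by
    have := (zeroSet_pos_le_one hθ).1
    positivity
  have hQ : ∀ j ∈ range (r.den * N + 1),
      (0 : ℝ) < (r.num.toNat * N + (K + 1) + (j : ℝ)) ^ (s + 1) := fun j _ => by positivity
  have hPp := prod_pos fun θ hθ => prod_pos (hP θ hθ)
  have hQp := prod_pos hQ
  have hden : ∑ j ∈ range (r.den * N + 1), log ((r.num.toNat : ℝ) * N + (K + 1) + (j : ℝ)) =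
      log (r.num.toNat * N + K + (r.den * N + 1)).factorial
          - log (r.num.toNat * N + K).factorial := by
    rw [← sum_log_eq]
    refine sum_congr rfl fun j _ => ?_
    push_cast
    ring_nf
  unfold Rfun
  rw [rat_mul_den hr, Nat.mul_div_cancel_left _ r.den_pos, add_sub_cancel_left]
  refine ⟨by positivity, ?_⟩
  rw [log_div (by positivity) hQp.ne', log_mul (by positivity) (by positivity),
    log_mul (by positivity) (by positivity), log_mul (by positivity) (by positivity),
    log_div (by positivity) (by positivity), log_mul (by positivity) hPp.ne',
    log_prod (fun θ hθ => (prod_pos (hP θ hθ)).ne'), log_prod (fun j hj => (hQ j hj).ne')]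
  simp only [log_pow]
  rw [← mul_sum, hden, sum_congr rfl (fun θ hθ => log_prod (fun j hj => (hP θ hθ j hj).ne'))]
  push_cast
  ring

lemma mul_mem_bounds {S E e : ℝ} (hS : 0 ≤ S) (h : |E| ≤ e) : -(S * e) ≤ S * E ∧ S * E ≤ S * e := by
  have := abs_le.1 h
  constructor <;> nlinarith

set_option maxHeartbeats 1000000 in
/-- Uniform asymptotics: the term at `t = rn + k` has logarithm `n * phase (k / n)` up to an error
`O(1 + log (n + k))`, for all `k = K + 1 ≥ 1`. -/
lemma exists_abs_log_Rfun_sub_le {Psi : Finset ℕ} {r : ℚ} (hr : 0 < r) (hPsi : ∀ b ∈ Psi, 0 < b)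
    (s : ℕ) :
    ∃ C : ℝ, 0 ≤ C ∧ ∀ N K : ℕ, 1 ≤ N →
      |log (Rfun Psi r s (r.den * N) (r.num.toNat * N + (K + 1))) -
        ((r.den * N : ℕ) : ℝ) * phase (log (A1 Psi r) + log (A2 Psi r)
          + (2 * (r : ℝ) + 1) * (zeroSet Psi).card * log r.den) (zeroSet Psi).card (s + 1) r
          (((K : ℝ) + 1) / ((r.den * N : ℕ) : ℝ))| ≤
        C * (1 + log (((r.den * N : ℕ) : ℝ) + (K + 1))) := by
  set a := r.num.toNat with ha
  set d := r.den with hd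
  set F : ℝ := ((zeroSet Psi).card : ℝ) with hF
  -- `W * (n + k)` exceeds every argument of a factorial or logarithm below, plus one
  set W : ℝ := 2 * a + 3 with hW
  have hd1 : (1 : ℝ) ≤ d := by exact_mod_cast r.den_pos
  have hW1 : 0 ≤ log W := log_nonneg (by simp only [hW]; linarith [(Nat.cast_nonneg a : (0:ℝ) ≤ a)])
  have hF0 : 0 ≤ F := by positivity
  refine ⟨(4 * ((s : ℝ) + 1) + (2 * a + d) * F + 1 + 3 * F) * (1 + log W), by positivity,
    fun N K hN => ?_⟩
  have hN1 : (1 : ℝ) ≤ N := by exact_mod_cast hN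
  have hK0 : (0 : ℝ) ≤ K := by positivity
  have ha0 : (0 : ℝ) ≤ a := by positivity
  set n : ℕ := d * N with hn
  have hnr : (n : ℝ) = d * N := by simp [hn]
  have hNn : (N : ℝ) ≤ n := by rw [hnr]; nlinarith
  have hn1 : (1 : ℝ) ≤ n := hN1.trans hNn
  have haN : (a : ℝ) * N ≤ a * n := by gcongr
  set e : ℝ := 1 + log (W * (n + (K + 1))) with he
  have hWn : log (W * (n + (K + 1))) = log W + log (n + (K + 1)) :=
    log_mul (by positivity) (by positivity)
  have hl : 0 ≤ log ((n : ℝ) + (K + 1)) := log_nonneg (by linarith)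
  have hfin : (4 * ((s : ℝ) + 1) + (2 * a + d) * F + 1 + 3 * F) * e ≤
      (4 * (s + 1) + (2 * a + d) * F + 1 + 3 * F) * (1 + log W) * (1 + log (n + (K + 1))) := by
    rw [mul_assoc]
    gcongr
    rw [he, hWn]
    linarith [mul_nonneg hW1 hl]
  have haK : 0 ≤ (a : ℝ) * K := by positivity
  have hE : ∀ y : ℕ, (y : ℝ) + 1 ≤ W * (n + (K + 1)) →
      |log y.factorial - ((y : ℝ) * log y - y)| ≤ e := fun y hy => by
    refine (abs_log_factorial_sub_le y).trans ?_
    simp only [he]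
    gcongr
  have hlog : ∀ y : ℝ, 1 ≤ y → y ≤ W * (n + (K + 1)) → |log y| ≤ e := fun y h1 hy => by
    rw [abs_of_nonneg (log_nonneg h1)]
    have := log_le_log (by linarith) hy
    linarith
  obtain ⟨hpos, hlogR⟩ := Rfun_pos_and_log hr hPsi s N K
  rw [hlogR]
  rw [← ha, ← hd, ← hF, ← hn]
  set M : ℕ := 2 * (a * N) + n with hM
  have hMr : (M : ℝ) = 2 * (a * N) + n := by simp [hM]
  have hPb : ∀ θ ∈ zeroSet Psi, _ := fun θ hθ =>
    sum_log_shift_bounds K M (zeroSet_pos_le_one hθ).1 (zeroSet_pos_le_one hθ).2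
  have hP1 := card_nsmul_le_sum _ _ _ fun θ hθ => (hPb θ hθ).1
  have hP2 := sum_le_card_nsmul _ _ _ fun θ hθ => (hPb θ hθ).2
  rw [nsmul_eq_mul, ← hF] at hP1 hP2
  have hscale := phase_scaling (log (A1 Psi r) + log (A2 Psi r)) F (s + 1) (ρ := r) (d := d)
    (n := n) (k := (K : ℝ) + 1) (by exact_mod_cast hr) (by linarith) (by linarith) (by linarith)
  have hρn : (r : ℝ) * n = a * N := rat_mul_den hr N
  have hρd : (2 * (r : ℝ) + 1) * d = 2 * a + d := by
    rw [rat_cast_eq hr, ← ha, ← hd]; field_simp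
  have hnd : (n : ℝ) / d = N := by rw [hnr]; field_simp
  have hρM : (2 * (r : ℝ) + 1) * n = M := by rw [hMr, ← hρn]; ring
  rw [hρn, hρd, hnd, hρM] at hscale
  rw [hscale]
  have hWe : W * (n + (K + 1)) = 2 * (a * n) + 2 * (a * K) + 2 * a + 3 * n + 3 * K + 3 := by
    rw [hW]; ring
  have haN0 : 0 ≤ (a : ℝ) * N := by positivity
  have E1 := mul_mem_bounds (S := (s : ℝ) + 1) (by positivity) (hE n (by rw [hWe]; linarith))
  have E2 := mul_mem_bounds (S := (2 * a + d) * F) (by positivity)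
    (hE N (by rw [hWe]; linarith))
  have E3 := mul_mem_bounds hF0 (hE (K + 1 + M) (by push_cast; rw [hMr]; rw [hWe]; linarith))
  have E4 := mul_mem_bounds hF0 (hE (K + 1) (by push_cast; rw [hWe]; linarith))
  have E5 := mul_mem_bounds (S := (s : ℝ) + 1) (by positivity)
    (hE (a * N + K + 1) (by push_cast; rw [hWe]; linarith))
  have E6 := mul_mem_bounds (S := (s : ℝ) + 1) (by positivity)
    (hE (a * N + K + 1 + n) (by push_cast; rw [hWe]; linarith))
  have E7 := abs_le.1 (hlog (K + 1) (by linarith) (by rw [hWe]; linarith))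
  have E8 := mul_mem_bounds hF0
    (hlog (K + 1 + M) (by rw [hMr]; linarith) (by rw [hMr]; rw [hWe]; linarith))
  have E9 := mul_mem_bounds (S := (s : ℝ) + 1) (by positivity)
    (hlog (a * N + K + 1) (by linarith) (by rw [hWe]; linarith))
  have hT := log_factorial_succ (a * N + K)
  have hT2 : a * N + K + (n + 1) = a * N + K + 1 + n := by ring
  rw [hT2]
  refine le_trans ?_ hfin
  push_cast at E3 E4 E5 E6 hT ⊢
  have hT' : log (a * N + K).factorial = log (a * N + K + 1).factorial - log ((a : ℝ) * N + K + 1) := by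
    linarith
  rw [hT', show (a : ℝ) * N + (K + 1) = a * N + K + 1 by ring]
  rw [abs_le]
  constructor
  · linarith only [E1.1, E2.2, E3.1, E4.2, E5.1, E6.2, E7.1, E8.2, E9.2, hP1]
  · linarith only [E1.2, E2.1, E3.2, E4.1, E5.2, E6.1, E7.2, E8.1, E8.2, E9.1, hP2]

/-! ### The bounds for the series -/

lemma log_ff {Psi : Finset ℕ} {r : ℚ} (hr : 0 < r) (s : ℕ) {x : ℝ} (hx : 0 < x) :
    log (ff Psi r s x) = phaseDeriv (zeroSet Psi).card (s + 1) r x := by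
  have hρ : (0 : ℝ) < r := by exact_mod_cast hr
  unfold ff phaseDeriv
  rw [log_mul (by positivity) (by positivity), log_pow, log_pow,
    log_div (by positivity) hx.ne', log_div (by positivity) (by positivity)]
  push_cast
  ring

lemma gg_eq_exp {Psi : Finset ℕ} {r : ℚ} (hr : 0 < r) (hPsi : ∀ b ∈ Psi, 0 < b) (s : ℕ)
    {x : ℝ} (hx : 0 < x) (h0 : phaseDeriv (zeroSet Psi).card (s + 1) r x = 0) :
    gg Psi r s x = exp (phase (log (A1 Psi r) + log (A2 Psi r)
          + (2 * (r : ℝ) + 1) * (zeroSet Psi).card * log r.den) (zeroSet Psi).card (s + 1) r x) := by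
  have hρ : (0 : ℝ) < r := by exact_mod_cast hr
  have hA1 := A1_pos r hPsi
  have hA2 := A2_pos Psi r
  have hd : (0 : ℝ) < r.den := by exact_mod_cast r.den_pos
  have hg : 0 < gg Psi r s x := by unfold gg; positivity
  rw [← exp_log hg]
  congr 1
  unfold gg
  rw [log_mul (by positivity) (by positivity), log_mul (by positivity) (by positivity),
    log_mul (by positivity) (by positivity), log_mul (by positivity) (by positivity),
    log_pow, log_div (by positivity) (by positivity), log_rpow (by positivity),
    log_rpow (by positivity), log_rpow (by positivity), log_rpow (by positivity)]
  unfold phaseDeriv at h0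
  unfold phase
  push_cast
  linear_combination -x * h0

lemma summable_weight : Summable fun m : ℕ => 1 / ((m : ℝ) + 1) ^ 2 := by
  have h := (summable_nat_add_iff 1).2 (Real.summable_one_div_nat_pow.2 (one_lt_two))
  simpa using h

/-- The rate at the maximum `x₀` controls all terms, with a summable weight. -/
lemma exists_upper {Psi : Finset ℕ} {r : ℚ} (hr : 0 < r) (hPsi : ∀ b ∈ Psi, 0 < b)
    (h1 : 1 ∈ Psi) (s : ℕ) {x₀ : ℝ} (hx₀ : 0 < x₀)
    (h0 : phaseDeriv (zeroSet Psi).card (s + 1) r x₀ = 0) :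
    ∃ K₁ K₂ : ℝ, ∀ N : ℕ, 1 ≤ N → K₂ ≤ ((r.den * N : ℕ) : ℝ) → ∀ m : ℕ,
      0 ≤ Rfun Psi r s (r.den * N) ((m : ℝ) + 1 + 1) ∧
      Rfun Psi r s (r.den * N) ((m : ℝ) + 1 + 1) ≤
        exp (((r.den * N : ℕ) : ℝ) * phase (log (A1 Psi r) + log (A2 Psi r)
          + (2 * (r : ℝ) + 1) * (zeroSet Psi).card * log r.den) (zeroSet Psi).card (s + 1) r x₀
          + K₁ + K₂ * log ((r.den * N : ℕ) : ℝ)) * (1 / ((m : ℝ) + 1) ^ 2) := by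
  have hρ : (0 : ℝ) < r := by exact_mod_cast hr
  have hF : (0 : ℝ) < (zeroSet Psi).card := by
    exact_mod_cast card_pos.2 ⟨1, one_mem_zeroSet h1⟩
  obtain ⟨C, hC0, hC⟩ := exists_abs_log_Rfun_sub_le hr hPsi s
  set α := log (A1 Psi r) + log (A2 Psi r)
          + (2 * (r : ℝ) + 1) * (zeroSet Psi).card * log r.den
  obtain ⟨C', hC'⟩ := phase_le_log α (S := (s : ℝ) + 1) hF (by positivity) hρ
  have hmax := fun x (hx : 0 < x) => phase_le α hF hρ hx₀ h0 hx
  obtain ⟨hc, -, -⟩ := phaseDeriv_sign hF hρ hx₀ h0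
  set c := ((s : ℝ) + 1) - (zeroSet Psi).card * (2 * (r : ℝ) + 1) with hcdef
  have hc0 : 0 < c := by linarith
  set V := phase α (zeroSet Psi).card (s + 1) r x₀
  set a := r.num.toNat
  set d := r.den
  have hla : 0 ≤ log ((a : ℝ) + 1) := log_nonneg (by linarith [(Nat.cast_nonneg a : (0:ℝ) ≤ a)])
  set D := C + 2 + 2 * log ((a : ℝ) + 1) with hD
  have hD0 : 0 < D := by positivity
  -- one constant serves as the coefficient of `log n`, which must be at least `D`, and as the
  -- threshold for `n`, which must be at least `D / c`
  refine ⟨max D (D / c) + D / c * (C' - V), max D (D / c), fun N hN hn m => ?_⟩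
  set n : ℕ := d * N with hndef
  have hn1' : 1 ≤ n := Nat.mul_pos r.den_pos hN
  have hn1 : (1 : ℝ) ≤ n := by exact_mod_cast hn1'
  rcases Nat.lt_or_ge (a * N) (m + 2) with hm | hm
  · obtain ⟨K, hK⟩ := Nat.exists_eq_add_of_lt hm
    have ht : (m : ℝ) + 1 + 1 = a * N + (K + 1) := by
      have : ((m + 2 : ℕ) : ℝ) = ((a * N + K + 1 : ℕ) : ℝ) := by rw [hK]
      push_cast at this
      linarith
    obtain ⟨hpos, -⟩ := Rfun_pos_and_log hr hPsi s N K
    have hb := (abs_le.1 (hC N K hN)).2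
    rw [ht]
    refine ⟨hpos.le, ?_⟩
    have hm0 : (0 : ℝ) < (m : ℝ) + 1 := by positivity
    rw [mul_one_div, le_div_iff₀ (by positivity), ← log_le_iff_le_exp (by positivity),
      log_mul hpos.ne' (by positivity), log_pow]
    have hk : (0 : ℝ) < (K : ℝ) + 1 := by positivity
    set x := ((K : ℝ) + 1) / n with hx
    have hx0 : 0 < x := by positivity
    have hln : log ((n : ℝ) + (K + 1)) = log n + log (1 + x) := by
      rw [← log_mul (by positivity) (by positivity)]
      congr 1
      rw [hx]
      field_simp
    have hlm : log ((m : ℝ) + 1) ≤ log ((a : ℝ) + 1) + log ((n : ℝ) + (K + 1)) := by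
      rw [← log_mul (by positivity) (by positivity)]
      apply log_le_log hm0
      have hNn : (N : ℝ) ≤ n := by exact_mod_cast Nat.le_mul_of_pos_left N r.den_pos
      have : (a : ℝ) * N ≤ a * n := by gcongr
      have : (0 : ℝ) ≤ a * (K + 1) := by positivity
      linarith
    have hl1 : 0 ≤ log (1 + x) := log_nonneg (by linarith)
    have hl2 : 0 ≤ log (n : ℝ) := log_nonneg hn1
    have hV := hmax x hx0
    have hH := hC' x hx0
    set H := phase α (zeroSet Psi).card (s + 1) r x
    have hDc : D / c ≤ n := (le_max_right _ _).trans hn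
    have hcl : D * log (1 + x) ≤ D / c * (C' - H) := by
      rw [div_mul_eq_mul_div, le_div_iff₀ hc0]
      have := mul_le_mul_of_nonneg_left (show c * log (1 + x) ≤ C' - H by linarith) hD0.le
      linarith
    have hHV : (n - D / c) * H ≤ (n - D / c) * V := mul_le_mul_of_nonneg_left hV (by linarith)
    have hmx : D * log n ≤ max D (D / c) * log n :=
      mul_le_mul_of_nonneg_right (le_max_left _ _) hl2
    have hmx1 : D ≤ max D (D / c) := le_max_left _ _
    rw [hln] at hb hlm
    have hb' : log (Rfun Psi r s n (a * N + (K + 1))) + 2 * log ((m : ℝ) + 1) ≤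
        n * H + D * (1 + (log n + log (1 + x))) := by
      have := mul_nonneg hla (add_nonneg hl2 hl1)
      rw [hD]
      linarith
    push_cast
    linarith
  · rw [Rfun_eq_zero hr h1 s N m hm]
    exact ⟨le_rfl, by positivity⟩

/-- The term with `k = ⌈x₀ n⌉` has the expected size. -/
lemma exists_lower {Psi : Finset ℕ} {r : ℚ} (hr : 0 < r) (hPsi : ∀ b ∈ Psi, 0 < b)
    (s : ℕ) {x₀ : ℝ} (hx₀ : 0 < x₀) :
    ∃ C : ℝ, ∀ N : ℕ, 1 ≤ N → ∃ m : ℕ,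
      0 < Rfun Psi r s (r.den * N) ((m : ℝ) + 1 + 1) ∧
      ((r.den * N : ℕ) : ℝ) * phase (log (A1 Psi r) + log (A2 Psi r)
          + (2 * (r : ℝ) + 1) * (zeroSet Psi).card * log r.den) (zeroSet Psi).card (s + 1) r
          ((⌈x₀ * ((r.den * N : ℕ) : ℝ)⌉₊ : ℝ) / ((r.den * N : ℕ) : ℝ))
          - C - C * log ((r.den * N : ℕ) : ℝ) ≤
        log (Rfun Psi r s (r.den * N) ((m : ℝ) + 1 + 1)) := by
  obtain ⟨C, hC0, hC⟩ := exists_abs_log_Rfun_sub_le hr hPsi s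
  have hlx : 0 ≤ log (x₀ + 2) := log_nonneg (by linarith)
  refine ⟨C * (1 + log (x₀ + 2)), fun N hN => ?_⟩
  have hn1' : 1 ≤ r.den * N := Nat.mul_pos r.den_pos hN
  have hb := hC N
  set n : ℕ := r.den * N
  have hn1 : (1 : ℝ) ≤ n := by exact_mod_cast hn1'
  have hk0 : 0 < ⌈x₀ * (n : ℝ)⌉₊ := Nat.ceil_pos.2 (by positivity)
  have hk1 : (⌈x₀ * (n : ℝ)⌉₊ : ℝ) < x₀ * n + 1 := Nat.ceil_lt_add_one (by positivity)
  set k := ⌈x₀ * (n : ℝ)⌉₊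
  obtain ⟨K, hK⟩ := Nat.exists_eq_succ_of_ne_zero hk0.ne'
  have hKr : (k : ℝ) = (K : ℝ) + 1 := by rw [hK]; push_cast; rfl
  have ha : 1 ≤ r.num.toNat * N := by
    have : 0 < r.num := Rat.num_pos.2 hr
    exact Nat.mul_pos (by omega) hN
  obtain ⟨q, hq⟩ := Nat.exists_eq_add_of_le' ha
  have ht : ((q + K : ℕ) : ℝ) + 1 + 1 = r.num.toNat * N + (K + 1) := by
    have : ((r.num.toNat * N : ℕ) : ℝ) = ((q + 1 : ℕ) : ℝ) := by rw [hq]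
    push_cast at this ⊢
    linarith
  refine ⟨q + K, ?_⟩
  rw [ht, hKr]
  refine ⟨(Rfun_pos_and_log hr hPsi s N K).1, ?_⟩
  have h1 := (abs_le.1 (hb K hN)).1
  have h2 : log ((n : ℝ) + (K + 1)) ≤ log (x₀ + 2) + log n := by
    rw [← log_mul (by positivity) (by positivity)]
    apply log_le_log (by positivity)
    rw [← hKr]
    linarith
  have h3 : C * (1 + log ((n : ℝ) + (K + 1))) ≤ C * (1 + (log (x₀ + 2) + log n)) := by gcongr
  have h4 : 0 ≤ C * (log (x₀ + 2) * log n) := by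
    have := log_nonneg hn1
    positivity
  linarith

lemma tendsto_log_div_nat : Tendsto (fun n : ℕ => log (n : ℝ) / n) atTop (nhds 0) :=
  (isLittleO_log_id_atTop.tendsto_div_nhds_zero).comp tendsto_natCast_atTop_atTop

/-- Analysis lemma, first part: there is an absolute constant `B₀` such that whenever
`B ≥ B₀`, `r` is a positive rational and `s` is an odd positive integer with
`s ≥ 10(2r+1)B²`, the limit of `(r_{n,1})^{1/n}` over positive integers `n` divisible by
`P_{B,den(r)}` equals `g(x₀)`, where `r_{n,1} = ∑_{m=1}^{∞} R_n(m+1)` and `x₀` is the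
unique positive real with `f(x₀) = 1`. -/
theorem analysis_lemma_limit :
    ∃ B₀ : ℝ, ∀ B : ℝ, B₀ ≤ B → ∀ r : ℚ, 0 < r →
      ∀ Psi : Finset ℕ, (∀ b : ℕ, b ∈ Psi ↔ 0 < b ∧ (Nat.totient b : ℝ) ≤ B) →
      ∀ s : ℕ, Odd s → 10 * (2 * (r : ℝ) + 1) * B ^ 2 ≤ (s : ℝ) →
      ∀ x₀ : ℝ, 0 < x₀ → ff Psi r s x₀ = 1 →
      Tendsto (fun n : ℕ => (∑' m : ℕ, Rfun Psi r s n ((m : ℝ) + 1 + 1)) ^ ((n : ℝ)⁻¹))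
        (atTop ⊓ Filter.principal {n : ℕ | 0 < n ∧ Pconst Psi r ∣ n})
        (nhds (gg Psi r s x₀)) := by
  -- `B ≥ 1` puts `1` into `Ψ_B`, hence `θ = 1` into `𝓕_B`
  refine ⟨1, fun B hB r hr Psi hPsi s _ _ x₀ hx₀ hff => ?_⟩
  have hρ : (0 : ℝ) < r := by exact_mod_cast hr
  have hpos : ∀ b ∈ Psi, 0 < b := fun b hb => ((hPsi b).1 hb).1
  have h1 : 1 ∈ Psi := (hPsi 1).2 ⟨one_pos, by simpa using hB⟩
  have h0 : phaseDeriv (zeroSet Psi).card (s + 1) r x₀ = 0 := by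
    rw [← log_ff hr s hx₀, hff, log_one]
  rw [gg_eq_exp hr hpos s hx₀ h0]
  obtain ⟨K₁, K₂, hU⟩ := exists_upper hr hpos h1 s hx₀ h0
  obtain ⟨C, hL⟩ := exists_lower hr hpos s hx₀
  set α := log (A1 Psi r) + log (A2 Psi r)
          + (2 * (r : ℝ) + 1) * (zeroSet Psi).card * log r.den
  set V := phase α (zeroSet Psi).card (s + 1) r x₀
  set l := atTop ⊓ Filter.principal {n : ℕ | 0 < n ∧ Pconst Psi r ∣ n}
  set T : ℕ → ℝ := fun n => ∑' m : ℕ, Rfun Psi r s n ((m : ℝ) + 1 + 1) with hT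
  set w := ∑' m : ℕ, 1 / ((m : ℝ) + 1) ^ 2 with hw
  have hw0 : 0 < w := summable_weight.tsum_pos (fun m => by positivity) 0 (by positivity)
  have hbd : ∀ᶠ n in l, 0 < T n ∧
      phase α (zeroSet Psi).card (s + 1) r ((⌈x₀ * (n : ℝ)⌉₊ : ℝ) / (n : ℝ))
        - C * (n : ℝ)⁻¹ - C * (log n / n) ≤ log (T n) * (n : ℝ)⁻¹ ∧
      log (T n) * (n : ℝ)⁻¹ ≤ V + (K₁ + log w) * (n : ℝ)⁻¹ + K₂ * (log n / n) := by
    refine eventually_inf_principal.2 ?_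
    filter_upwards [tendsto_natCast_atTop_atTop.eventually_ge_atTop K₂] with n hnK hnS
    have hdvd : r.den ∣ n := (Dvd.intro_left 2 rfl).trans ((Dvd.intro _ rfl).trans hnS.2)
    obtain ⟨N, rfl⟩ := hdvd
    have hN : 1 ≤ N := Nat.pos_of_mul_pos_left hnS.1
    have hn0 : (0 : ℝ) < ((r.den * N : ℕ) : ℝ) := by exact_mod_cast hnS.1
    have hU := hU N hN hnK
    obtain ⟨m, hm0, hm⟩ := hL N hN
    have hsum := Summable.of_nonneg_of_le (fun m => (hU m).1) (fun m => (hU m).2)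
      (summable_weight.mul_left _)
    have hle := hsum.le_tsum m (fun j _ => (hU j).1)
    have hge := hsum.tsum_le_tsum (fun m => (hU m).2) (summable_weight.mul_left _)
    rw [tsum_mul_left, ← hw] at hge
    set n : ℕ := r.den * N
    have hTp : 0 < T n := hm0.trans_le hle
    have hlow := hm.trans (log_le_log hm0 hle)
    have hup := log_le_log hTp hge
    rw [log_mul (exp_pos _).ne' hw0.ne', log_exp] at hup
    refine ⟨hTp, ?_, ?_⟩
    · rw [← div_eq_mul_inv (log (T n)), le_div_iff₀ hn0]
      refine le_trans (le_of_eq ?_) hlow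
      field_simp
    · rw [← div_eq_mul_inv (log (T n)), div_le_iff₀ hn0]
      refine hup.trans (le_of_eq ?_)
      field_simp
      ring
  have hinv : Tendsto (fun n : ℕ => (n : ℝ)⁻¹) atTop (nhds 0) := tendsto_inv_atTop_nhds_zero_nat
  have hceil : Tendsto (fun n : ℕ => (⌈x₀ * (n : ℝ)⌉₊ : ℝ) / (n : ℝ)) atTop (nhds x₀) :=
    (tendsto_nat_ceil_mul_div_atTop hx₀.le).comp tendsto_natCast_atTop_atTop
  have hlow : Tendsto (fun n : ℕ =>
      phase α (zeroSet Psi).card (s + 1) r ((⌈x₀ * (n : ℝ)⌉₊ : ℝ) / (n : ℝ))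
        - C * (n : ℝ)⁻¹ - C * (log n / n)) l (nhds V) := by
    have := ((((hasDerivAt_phase α (zeroSet Psi).card (s + 1) hρ hx₀).continuousAt.tendsto).comp
      hceil).sub (hinv.const_mul C)).sub (tendsto_log_div_nat.const_mul C)
    simp only [mul_zero, sub_zero] at this
    exact this.mono_left inf_le_left
  have hup : Tendsto (fun n : ℕ => V + (K₁ + log w) * (n : ℝ)⁻¹ + K₂ * (log n / n)) l (nhds V) := by
    have := ((hinv.const_mul (K₁ + log w)).const_add V).add (tendsto_log_div_nat.const_mul K₂)
    simp only [mul_zero, add_zero] at this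
    exact this.mono_left inf_le_left
  have hlim : Tendsto (fun n : ℕ => log (T n) * (n : ℝ)⁻¹) l (nhds V) :=
    tendsto_of_tendsto_of_tendsto_of_le_of_le' hlow hup (hbd.mono fun n h => h.2.1)
      (hbd.mono fun n h => h.2.2)
  refine ((continuous_exp.tendsto V).comp hlim).congr' ?_
  filter_upwards [hbd] with n h
  exact (rpow_def_of_pos h.1 _).symm

end
end
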